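/- arXiv:0901.4056 — 2 statements merged into one kernel-verified Lean document; each statement's English description precedes it below -/
import Mathlib

section
/- Fix δ ∈ (0,1). There exist constants ε > 0 and A > 0 such that the following holds for all sufficiently large n. In the relaxed adaptive allocation model with ⌊(1−δ)n⌋ balls and n bins, pool size at most 2^m with m ≥ log n, all pool distributions having point masses at most k/n, and k·m ≤ ε·n: with probability at least 1 − A·n^{−4}, the number of collisions satisfies Col_2(⌊(1−δ)n⌋) ≥ (1−δ)²·n/16. In particular, any such algorithm incurs Ω(n) collisions with high probability. -/
open MeasureTheory Finset

/-- The load of bin `i` after `t` rounds, when ball `s` is placed in bin `J s ω`. -/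
def binLoad {Ω : Type*} {n : ℕ} (J : ℕ → Ω → Fin n) (t : ℕ) (i : Fin n) (ω : Ω) : ℕ :=
  ((Finset.range t).filter fun s => J s ω = i).card

/-- The number of collisions (pairs of balls sharing a bin) after `t` rounds. -/
def collisions {Ω : Type*} {n : ℕ} (J : ℕ → Ω → Fin n) (t : ℕ) (ω : Ω) : ℕ :=
  ∑ i, Nat.choose (binLoad J t i ω) 2

lemma binLoad_eq_sum {Ω : Type*} {n : ℕ} (J : ℕ → Ω → Fin n) (t : ℕ) (i : Fin n) (ω : Ω) :
    binLoad J t i ω = ∑ s ∈ range t, if J s ω = i then 1 else 0 := by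
  rw [binLoad, card_filter]

lemma binLoad_mono {Ω : Type*} {n : ℕ} (J : ℕ → Ω → Fin n) {s t : ℕ} (h : s ≤ t) (i : Fin n)
    (ω : Ω) : binLoad J s i ω ≤ binLoad J t i ω :=
  Finset.card_le_card (Finset.filter_subset_filter _ (Finset.range_subset_range.2 h))

lemma collisions_eq_sum {Ω : Type*} {n : ℕ} (J : ℕ → Ω → Fin n) (t : ℕ) (ω : Ω) :
    collisions J t ω = ∑ s ∈ range t, binLoad J s (J s ω) ω := by
  induction t with
  | zero => simp [collisions, binLoad]
  | succ t ih =>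
    rw [sum_range_succ, ← ih]
    have h : ∀ i, Nat.choose (binLoad J (t + 1) i ω) 2 =
        Nat.choose (binLoad J t i ω) 2 + if J t ω = i then binLoad J t i ω else 0 := by
      intro i
      rw [binLoad_eq_sum J (t + 1), sum_range_succ, ← binLoad_eq_sum]
      split_ifs
      · rw [Nat.choose_succ_succ' _ 1, Nat.choose_one_right, add_comm]
      · simp
    simp only [collisions, h, sum_add_distrib]
    simp

/-- Pairing a vector with the loads amounts to evaluating it along the allocation. -/
lemma sum_mul_binLoad {Ω : Type*} {n : ℕ} (J : ℕ → Ω → Fin n) (t : ℕ) (ω : Ω) (q : Fin n → ℝ) :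
    ∑ i, q i * binLoad J t i ω = ∑ s ∈ range t, q (J s ω) := by
  simp only [binLoad_eq_sum, Nat.cast_sum, mul_sum]
  rw [sum_comm]
  simp

lemma binLoad_le_sqrt {Ω : Type*} {n : ℕ} (J : ℕ → Ω → Fin n) (t : ℕ) (ω : Ω)
    (h : (collisions J t ω : ℝ) < n / 16) (i : Fin n) :
    (binLoad J t i ω : ℝ) ≤ √n := by
  have hn : (1 : ℝ) ≤ n := by exact_mod_cast (Fin.pos i)
  have h1 : Nat.choose (binLoad J t i ω) 2 ≤ collisions J t ω :=
    single_le_sum (f := fun i => Nat.choose (binLoad J t i ω) 2) (fun _ _ => Nat.zero_le _)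
      (mem_univ i)
  have h2 : ((Nat.choose (binLoad J t i ω) 2 : ℕ) : ℝ) ≤ collisions J t ω := by exact_mod_cast h1
  rw [Nat.cast_choose_two] at h2
  apply Real.le_sqrt_of_sq_le
  rcases le_or_gt (binLoad J t i ω) 1 with h3 | h3
  · have h4 : (binLoad J t i ω : ℝ) ≤ 1 := by exact_mod_cast h3
    have h5 : (0 : ℝ) ≤ binLoad J t i ω := Nat.cast_nonneg _
    nlinarith
  · have h4 : (2 : ℝ) ≤ binLoad J t i ω := by exact_mod_cast h3
    nlinarith

lemma sum_range_sum_range_mul (q : ℕ → ℝ) (T : ℕ) :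
    ∑ t ∈ range T, ∑ s ∈ range t, q t * q s =
      ((∑ t ∈ range T, q t) ^ 2 - ∑ t ∈ range T, q t ^ 2) / 2 := by
  induction T with
  | zero => simp
  | succ T ih =>
    rw [sum_range_succ, ih, sum_range_succ, sum_range_succ, ← mul_sum]
    ring

/-- Probability vectors with small point masses have a large total pairwise correlation. -/
lemma le_sum_pairwise_correlation {n : ℕ} (hn : 0 < n) (T : ℕ) (κ : ℝ) (q : ℕ → Fin n → ℝ)
    (h0 : ∀ t i, 0 ≤ q t i) (h1 : ∀ t, ∑ i, q t i = 1) (hκ : ∀ t i, q t i ≤ κ) :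
    ((T : ℝ) ^ 2 / n - T * κ) / 2 ≤
      ∑ t ∈ range T, ∑ s ∈ range t, ∑ i, q t i * q s i := by
  have e : ∑ t ∈ range T, ∑ s ∈ range t, ∑ i, q t i * q s i =
      (∑ i, (∑ t ∈ range T, q t i) ^ 2 - ∑ t ∈ range T, ∑ i, q t i ^ 2) / 2 := by
    rw [sum_comm (s := range T), ← sum_sub_distrib, sum_div]
    simp_rw [← sum_range_sum_range_mul]
    rw [sum_comm (s := univ)]
    refine sum_congr rfl fun t _ => ?_
    rw [sum_comm]
  have hsq : (T : ℝ) ^ 2 / n ≤ ∑ i, (∑ t ∈ range T, q t i) ^ 2 := by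
    have h := sq_sum_le_card_mul_sum_sq (s := univ) (f := fun i => ∑ t ∈ range T, q t i)
    rw [sum_comm] at h
    simp only [h1, sum_const, card_range, card_univ, Fintype.card_fin, nsmul_eq_mul, mul_one] at h
    rw [div_le_iff₀ (by exact_mod_cast hn)]
    linarith
  have hdiag : ∑ t ∈ range T, ∑ i, q t i ^ 2 ≤ T * κ := by
    calc ∑ t ∈ range T, ∑ i, q t i ^ 2 ≤ ∑ t ∈ range T, ∑ i, q t i * κ := by
          gcongr with t _ i _
          rw [sq]
          exact mul_le_mul_of_nonneg_left (hκ t i) (h0 t i)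
      _ = T * κ := by simp [← sum_mul, h1]
  rw [e]
  linarith

/-- `e⁻ˣ ≤ 1 - x / 2` on the unit interval. -/
lemma exp_neg_le_one_sub_half {x : ℝ} (h0 : 0 ≤ x) (h1 : x ≤ 1) :
    Real.exp (-x) ≤ 1 - x / 2 := by
  have h := Real.add_one_le_exp x
  rw [Real.exp_neg]
  apply inv_le_of_inv_le₀ (by linarith)
  refine le_trans ?_ h
  rw [inv_le_iff_one_le_mul₀ (by linarith)]
  nlinarith

section Allocation

variable {Ω : Type*} {mΩ : MeasurableSpace Ω} {μ : Measure Ω} {n : ℕ}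
  {ℱ : Filtration ℕ mΩ} {Q : ℕ → Ω → Fin n → ℝ} {J : ℕ → Ω → Fin n} {f : ℕ → Ω → Fin n → ℝ}

lemma measurable_eval_allocation (hJ : ∀ t, Measurable[ℱ (t + 1)] (J t))
    (hf : ∀ t i, Measurable[ℱ t] fun ω => f t ω i) (t : ℕ) :
    Measurable[ℱ (t + 1)] fun ω => f t ω (J t ω) := by
  have e : (fun ω => f t ω (J t ω)) = fun ω => ∑ i, if J t ω = i then f t ω i else 0 := by
    ext ω
    simp
  rw [e]
  refine Finset.measurable_sum _ fun i _ => ?_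
  exact Measurable.ite (hJ t (measurableSet_singleton i))
    ((hf t i).mono (ℱ.mono (Nat.le_succ t)) le_rfl) measurable_const

lemma measurable_binLoad (hJ : ∀ t, Measurable[ℱ (t + 1)] (J t)) (t : ℕ) (i : Fin n) :
    Measurable[ℱ t] fun ω => (binLoad J t i ω : ℝ) := by
  simp only [binLoad_eq_sum, Nat.cast_sum]
  refine Finset.measurable_sum _ fun s hs => ?_
  simp only [Nat.cast_ite]
  exact Measurable.ite
    ((hJ s).mono (ℱ.mono (Nat.succ_le_of_lt (mem_range.1 hs))) le_rfl (measurableSet_singleton i))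
    measurable_const measurable_const

/-- Integrating out the position of the next ball. -/
lemma integral_eval_allocation [IsProbabilityMeasure μ]
    (hJ : ∀ t, Measurable[ℱ (t + 1)] (J t))
    (hQJ : ∀ t i, (μ[(fun ω => if J t ω = i then (1 : ℝ) else 0) | ℱ t])
      =ᵐ[μ] fun ω => Q t ω i)
    (t : ℕ) (g : Ω → Fin n → ℝ) (hg : ∀ i, Measurable[ℱ t] fun ω => g ω i)
    (C : ℝ) (hC : ∀ ω i, |g ω i| ≤ C) :
    ∫ ω, g ω (J t ω) ∂μ = ∫ ω, ∑ i, g ω i * Q t ω i ∂μ := by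
  have hind : ∀ i, Measurable fun ω => if J t ω = i then (1 : ℝ) else 0 := fun i =>
    Measurable.ite ((hJ t).mono (ℱ.le _) le_rfl (measurableSet_singleton i))
      measurable_const measurable_const
  have hind_int : ∀ i, Integrable (fun ω => if J t ω = i then (1 : ℝ) else 0) μ := fun i =>
    Integrable.of_bound (hind i).aestronglyMeasurable 1
      (ae_of_all _ fun ω => by split_ifs <;> simp)
  have h_int : ∀ i, Integrable ((fun ω => g ω i) * fun ω => if J t ω = i then (1 : ℝ) else 0) μ :=
    fun i => (hind_int i).bdd_mul ((hg i).mono (ℱ.le _) le_rfl).aestronglyMeasurable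
      (ae_of_all _ fun ω => hC ω i)
  have hae : ∀ i, μ[(fun ω => g ω i) * (fun ω => if J t ω = i then (1 : ℝ) else 0) | ℱ t]
      =ᵐ[μ] fun ω => g ω i * Q t ω i := fun i => by
    refine (condExp_mul_of_stronglyMeasurable_left (hg i).stronglyMeasurable (h_int i)
      (hind_int i)).trans ?_
    filter_upwards [hQJ t i] with ω hω
    simp only [Pi.mul_apply, hω]
  have e : (fun ω => g ω (J t ω)) =
      fun ω => ∑ i, ((fun ω => g ω i) * fun ω => if J t ω = i then (1 : ℝ) else 0) ω := by
    ext ω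
    simp
  rw [e, integral_finsetSum _ fun i _ => h_int i,
    integral_finsetSum _ fun i _ => integrable_condExp.congr (hae i)]
  refine sum_congr rfl fun i _ => ?_
  rw [← integral_condExp (ℱ.le t), integral_congr_ae (hae i)]

/-- The exponential of half the compensator minus the process has mean at most one. -/
lemma integral_exp_compensator_sub_le_one [IsProbabilityMeasure μ]
    (hQ0 : ∀ t ω i, 0 ≤ Q t ω i) (hQ1 : ∀ t ω, ∑ i, Q t ω i = 1)
    (hQ : ∀ t i, Measurable[ℱ t] fun ω => Q t ω i)
    (hJ : ∀ t, Measurable[ℱ (t + 1)] (J t))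
    (hQJ : ∀ t i, (μ[(fun ω => if J t ω = i then (1 : ℝ) else 0) | ℱ t])
      =ᵐ[μ] fun ω => Q t ω i)
    (hf : ∀ t i, Measurable[ℱ t] fun ω => f t ω i)
    (hf0 : ∀ t ω i, 0 ≤ f t ω i) (hf1 : ∀ t ω i, f t ω i ≤ 1) (T : ℕ) :
    Integrable (fun ω =>
      Real.exp (∑ t ∈ range T, ((∑ i, Q t ω i * f t ω i) / 2 - f t ω (J t ω)))) μ ∧
    ∫ ω, Real.exp (∑ t ∈ range T, ((∑ i, Q t ω i * f t ω i) / 2 - f t ω (J t ω))) ∂μ ≤ 1 := by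
  set D : ℕ → Ω → ℝ := fun t ω => ∑ i, Q t ω i * f t ω i with hD
  have hDm : ∀ t, Measurable[ℱ t] (D t) := fun t =>
    Finset.measurable_sum _ fun i _ => (hQ t i).mul (hf t i)
  have hD1 : ∀ t ω, D t ω ≤ 1 := fun t ω => by
    rw [← hQ1 t ω]
    exact sum_le_sum fun i _ => mul_le_of_le_one_right (hQ0 t ω i) (hf1 t ω i)
  set W : ℕ → Ω → ℝ := fun T ω => Real.exp (∑ t ∈ range T, (D t ω / 2 - f t ω (J t ω))) with hW
  have hWm : ∀ T, Measurable[ℱ T] (W T) := fun T => by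
    refine Real.measurable_exp.comp (Finset.measurable_sum _ fun t ht => ?_)
    have ht' := Nat.succ_le_of_lt (mem_range.1 ht)
    exact (((hDm t).mono (ℱ.mono (by omega)) le_rfl).div_const 2).sub
      ((measurable_eval_allocation hJ hf t).mono (ℱ.mono ht') le_rfl)
  have hWb : ∀ T ω, W T ω ≤ Real.exp T := fun T ω => by
    refine Real.exp_le_exp.2 ?_
    calc ∑ t ∈ range T, (D t ω / 2 - f t ω (J t ω)) ≤ ∑ t ∈ range T, (1 : ℝ) :=
          sum_le_sum fun t _ => by linarith [hD1 t ω, hf0 t ω (J t ω)]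
      _ = T := by simp
  have hWi : ∀ T, Integrable (W T) μ := fun T =>
    Integrable.of_bound ((hWm T).mono (ℱ.le _) le_rfl).aestronglyMeasurable (Real.exp T)
      (ae_of_all _ fun ω => by
        rw [Real.norm_of_nonneg (Real.exp_nonneg _)]
        exact hWb T ω)
  refine ⟨hWi T, ?_⟩
  change ∫ ω, W T ω ∂μ ≤ 1
  induction T with
  | zero => simp [hW]
  | succ T ih =>
    refine le_trans ?_ ih
    set g : Ω → Fin n → ℝ := fun ω i => W T ω * Real.exp (D T ω / 2 - f T ω i) with hg
    have e : W (T + 1) = fun ω => g ω (J T ω) := by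
      ext ω
      simp only [hW, hg]
      rw [sum_range_succ, Real.exp_add]
    have hgm : ∀ i, Measurable[ℱ T] fun ω => g ω i := fun i =>
      (hWm T).mul (Real.measurable_exp.comp (((hDm T).div_const 2).sub (hf T i)))
    have hgb : ∀ ω i, |g ω i| ≤ Real.exp T * Real.exp 1 := fun ω i => by
      rw [abs_of_nonneg (by positivity)]
      exact mul_le_mul (hWb T ω) (Real.exp_le_exp.2 (by linarith [hD1 T ω, hf0 T ω i]))
        (Real.exp_nonneg _) (Real.exp_nonneg _)
    rw [e, integral_eval_allocation hJ hQJ T g hgm _ hgb]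
    refine integral_mono_of_nonneg
      (ae_of_all _ fun ω => sum_nonneg fun i _ => mul_nonneg (by positivity) (hQ0 T ω i))
      (hWi T) (ae_of_all _ fun ω => ?_)
    have hsum : ∑ i, Real.exp (-f T ω i) * Q T ω i ≤ Real.exp (-(D T ω / 2)) :=
      calc ∑ i, Real.exp (-f T ω i) * Q T ω i ≤ ∑ i, (1 - f T ω i / 2) * Q T ω i :=
            sum_le_sum fun i _ => mul_le_mul_of_nonneg_right
              (exp_neg_le_one_sub_half (hf0 T ω i) (hf1 T ω i)) (hQ0 T ω i)
        _ = -(D T ω / 2) + 1 := by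
            simp only [sub_mul, one_mul, sum_sub_distrib, hQ1, hD, sum_div]
            rw [sub_eq_neg_add]
            congr 2
            exact sum_congr rfl fun i _ => by ring
        _ ≤ Real.exp (-(D T ω / 2)) := Real.add_one_le_exp _
    calc ∑ i, g ω i * Q T ω i
        = W T ω * Real.exp (D T ω / 2) * ∑ i, Real.exp (-f T ω i) * Q T ω i := by
          rw [mul_sum]
          refine sum_congr rfl fun i _ => ?_
          simp only [hg, sub_eq_add_neg, Real.exp_add]
          ring
      _ ≤ W T ω * Real.exp (D T ω / 2) * Real.exp (-(D T ω / 2)) :=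
          mul_le_mul_of_nonneg_left hsum (by positivity)
      _ = W T ω := by rw [mul_assoc, ← Real.exp_add, add_neg_cancel, Real.exp_zero, mul_one]

/-- Freedman-type lower tail: a `[0, 1]`-valued process evaluated along the allocation is
rarely much below half of its compensator. -/
lemma measureReal_sum_lt_half_compensator_sub_le [IsProbabilityMeasure μ]
    (hQ0 : ∀ t ω i, 0 ≤ Q t ω i) (hQ1 : ∀ t ω, ∑ i, Q t ω i = 1)
    (hQ : ∀ t i, Measurable[ℱ t] fun ω => Q t ω i)
    (hJ : ∀ t, Measurable[ℱ (t + 1)] (J t))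
    (hQJ : ∀ t i, (μ[(fun ω => if J t ω = i then (1 : ℝ) else 0) | ℱ t])
      =ᵐ[μ] fun ω => Q t ω i)
    (hf : ∀ t i, Measurable[ℱ t] fun ω => f t ω i)
    (hf0 : ∀ t ω i, 0 ≤ f t ω i) (hf1 : ∀ t ω i, f t ω i ≤ 1) (T : ℕ) (a : ℝ) :
    μ.real {ω | ∑ t ∈ range T, f t ω (J t ω) <
      (∑ t ∈ range T, ∑ i, Q t ω i * f t ω i) / 2 - a} ≤ Real.exp (-a) := by
  obtain ⟨h_int, hle⟩ := integral_exp_compensator_sub_le_one hQ0 hQ1 hQ hJ hQJ hf hf0 hf1 T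
  have hM := mul_meas_ge_le_integral_of_nonneg (ae_of_all _ fun ω => Real.exp_nonneg _) h_int
    (Real.exp a)
  have hsub : μ.real {ω | ∑ t ∈ range T, f t ω (J t ω) <
      (∑ t ∈ range T, ∑ i, Q t ω i * f t ω i) / 2 - a} ≤
      μ.real {ω | Real.exp a ≤
        Real.exp (∑ t ∈ range T, ((∑ i, Q t ω i * f t ω i) / 2 - f t ω (J t ω)))} := by
    refine measureReal_mono fun ω hω => Real.exp_le_exp.2 ?_
    rw [Set.mem_ofPred_eq] at hω
    rw [sum_sub_distrib, ← sum_div]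
    linarith
  rw [Real.exp_neg, ← one_div, le_div_iff₀ (Real.exp_pos a)]
  nlinarith [Real.exp_pos a]

end Allocation

/-- If the loads correlate with every strategy used, and the collisions are not far below half
of their compensator, then there are many collisions. -/
lemma collisions_ge_of_typical {Ω : Type*} {n : ℕ} (hn : 0 < n) (J : ℕ → Ω → Fin n)
    (q : ℕ → Fin n → ℝ) (T : ℕ) (κ ε b : ℝ) (ω : Ω)
    (h0 : ∀ t i, 0 ≤ q t i) (h1 : ∀ t, ∑ i, q t i = 1) (hκ : ∀ t i, q t i ≤ κ)
    (hcor : ∀ t ∈ range T, (∑ s ∈ range t, ∑ i, q s i * q t i) / 2 - ε ≤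
      ∑ s ∈ range t, q t (J s ω))
    (hcol : (∑ t ∈ range T, ∑ i, q t i * binLoad J t i ω) / 2 - b ≤ collisions J T ω) :
    ((T : ℝ) ^ 2 / n - T * κ) / 8 - T * ε / 2 - b ≤ collisions J T ω := by
  have hsum := sum_le_sum hcor
  simp_rw [← sum_mul_binLoad] at hsum
  rw [sum_sub_distrib, ← sum_div, sum_const, card_range, nsmul_eq_mul] at hsum
  have hpair := le_sum_pairwise_correlation hn T κ q h0 h1 hκ
  simp_rw [mul_comm (q _ _) (q _ _)] at hsum hpair
  linarith

lemma eventually_sqrt_mul_log_le (c : ℝ) (hc : 0 < c) :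
    ∃ n₀ : ℕ, ∀ n : ℕ, n₀ ≤ n → 1 + 4 * (√n * Real.log n) ≤ c * n := by
  have h1 : (fun x : ℝ => Real.log x) =o[Filter.atTop] fun x => x ^ (1 / 2 : ℝ) :=
    isLittleO_log_rpow_atTop (by norm_num)
  have h2 := (h1.bound (c := c / 8) (by positivity)).and
    ((Filter.eventually_ge_atTop (2 / c)).and (Filter.eventually_ge_atTop (1 : ℝ)))
  obtain ⟨n₀, hn₀⟩ := Filter.eventually_atTop.1 (tendsto_natCast_atTop_atTop.eventually h2)
  refine ⟨n₀, fun n hn => ?_⟩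
  obtain ⟨ha, hb, hc'⟩ := hn₀ n hn
  rw [← Real.sqrt_eq_rpow, Real.norm_of_nonneg (Real.log_nonneg hc'),
    Real.norm_of_nonneg (Real.sqrt_nonneg _)] at ha
  rw [div_le_iff₀ hc] at hb
  have hs := Real.sq_sqrt (Nat.cast_nonneg (α := ℝ) n)
  nlinarith [mul_le_mul_of_nonneg_left ha (Real.sqrt_nonneg (n : ℝ))]

/-- The collision lower bound of Theorem 3 of the paper: fix `δ ∈ (0,1)`. There are
constants `ε, A > 0` such that for all sufficiently large `n`, in the relaxed adaptive
allocation model allocating `⌊(1-δ)n⌋` balls into `n` bins with pool of at most `2^m`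
strategies (each with point masses at most `k/n`), `m ≥ log n` and `k m ≤ ε n`, with
probability at least `1 - A n⁻⁴` the number of collisions is at least `(1-δ)² n / 16`. -/
theorem matching_lower_bound_collisions (δ : ℝ) (hδ0 : 0 < δ) (hδ1 : δ < 1) :
    ∃ ε : ℝ, 0 < ε ∧ ∃ A : ℝ, 0 < A ∧ ∃ n₀ : ℕ, ∀ n : ℕ, n₀ ≤ n →
    ∀ k m : ℕ, Real.log n ≤ m → (k : ℝ) * m ≤ ε * n →
    ∀ (Ω : Type) (_ : MeasurableSpace Ω) (μ : Measure Ω), IsProbabilityMeasure μ →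
    ∀ (ℱ : Filtration ℕ ‹MeasurableSpace Ω›)
      (pool : Finset (Fin n → ℝ)), pool.card ≤ 2 ^ m →
      (∀ ν ∈ pool, ∀ i, 0 ≤ ν i) →
      (∀ ν ∈ pool, ∑ i, ν i = 1) →
      (∀ ν ∈ pool, ∀ i, ν i ≤ (k : ℝ) / n) →
    ∀ (Q : ℕ → Ω → Fin n → ℝ) (J : ℕ → Ω → Fin n),
      (∀ t ω, Q t ω ∈ pool) →
      (∀ t i, Measurable[ℱ t] fun ω => Q t ω i) →
      (∀ t, Measurable[ℱ (t + 1)] (J t)) →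
      (∀ t i, (μ[(fun ω => if J t ω = i then (1 : ℝ) else 0) | ℱ t])
          =ᵐ[μ] fun ω => Q t ω i) →
      1 - A / (n : ℝ) ^ 4
        ≤ (μ {ω | (1 - δ) ^ 2 * n / 16
            ≤ (collisions J (Nat.floor ((1 - δ) * n)) ω : ℝ)}).toReal := by
  set c : ℝ := 1 - δ with hc
  have hc0 : 0 < c := by linarith
  have hc1 : c < 1 := by linarith
  obtain ⟨n₁, hn₁⟩ := eventually_sqrt_mul_log_le (c ^ 2 / 32) (by positivity)
  refine ⟨c ^ 2 / 128, by positivity, 2, two_pos, n₁ + 2, ?_⟩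
  intro n hn k m hm hkm Ω _ μ _ ℱ pool hcard hp0 hp1 hpk Q J hQpool hQm hJm hQJ
  have hn2 : (2 : ℝ) ≤ n := by exact_mod_cast (by omega : 2 ≤ n)
  have hnpos : (0 : ℝ) < n := by linarith
  have hlarge := hn₁ n (by omega)
  have hm1 : (1 : ℝ) ≤ m := by
    have : (0 : ℝ) < m := (Real.log_pos (by linarith)).trans_le hm
    exact_mod_cast (Nat.cast_pos.1 this)
  set κ : ℝ := (k : ℝ) / n with hκdef
  have hκ : κ ≤ c ^ 2 / 128 := by
    rw [hκdef, div_le_iff₀ hnpos]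
    nlinarith [Nat.cast_nonneg (α := ℝ) k]
  have hκm : κ * m ≤ c ^ 2 / 128 := by
    rw [hκdef, div_mul_eq_mul_div, div_le_iff₀ hnpos]
    exact hkm
  set T := ⌊c * n⌋₊
  have hTle : (T : ℝ) ≤ c * n := Nat.floor_le (by positivity)
  have hTge : c * n - 1 < T := by linarith [Nat.lt_floor_add_one (c * n)]
  have hTn : (T : ℝ) ≤ n := by nlinarith
  have hQ0 : ∀ t ω i, 0 ≤ Q t ω i := fun t ω i => hp0 _ (hQpool t ω) i
  have hQ1 : ∀ t ω, ∑ i, Q t ω i = 1 := fun t ω => hp1 _ (hQpool t ω)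
  have hexp_log : Real.exp (-(4 * Real.log n)) = 1 / (n : ℝ) ^ 4 := by
    have h : (4 : ℝ) * Real.log n = Real.log ((n : ℝ) ^ 4) := by
      rw [Real.log_pow]
      norm_num
    rw [h, Real.exp_neg, Real.exp_log (by positivity), one_div]
  set B₁ : Set Ω := ⋃ ν ∈ pool, ⋃ t ∈ range T, {ω | ∑ s ∈ range t, ν (J s ω) / κ <
    (∑ s ∈ range t, ∑ i, Q s ω i * (ν i / κ)) / 2 - 6 * m} with hB₁
  set B₂ : Set Ω := {ω | ∑ t ∈ range T, min (binLoad J t (J t ω) ω : ℝ) √n / √n <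
    (∑ t ∈ range T, ∑ i, Q t ω i * (min (binLoad J t i ω : ℝ) √n / √n)) / 2 - 4 * Real.log n}
    with hB₂
  have hκpos : ∀ ν ∈ pool, 0 < κ := fun ν hν => by
    by_contra! h
    have h' : ∑ i, ν i ≤ ∑ i : Fin n, (0 : ℝ) :=
      sum_le_sum fun i _ => (hpk ν hν i).trans h
    rw [hp1 ν hν, sum_const_zero] at h'
    linarith
  have hμB₁ : μ.real B₁ ≤ 1 / (n : ℝ) ^ 4 := by
    calc μ.real B₁ ≤ ∑ ν ∈ pool, ∑ t ∈ range T, Real.exp (-(6 * m)) := by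
          refine (measureReal_biUnion_finset_le _ _).trans (sum_le_sum fun ν hν => ?_)
          refine (measureReal_biUnion_finset_le _ _).trans (sum_le_sum fun t _ => ?_)
          exact measureReal_sum_lt_half_compensator_sub_le (f := fun _ _ i => ν i / κ)
            hQ0 hQ1 hQm hJm hQJ (fun _ _ => measurable_const)
            (fun _ _ i => div_nonneg (hp0 ν hν i) (hκpos ν hν).le)
            (fun _ _ i => div_le_one_of_le₀ (hpk ν hν i) (hκpos ν hν).le) t _
      _ = pool.card * (T * Real.exp (-(6 * m))) := by simp
      _ ≤ Real.exp m * (Real.exp m * Real.exp (-(6 * m))) := by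
          gcongr
          · calc (pool.card : ℝ) ≤ 2 ^ m := by exact_mod_cast hcard
              _ ≤ Real.exp 1 ^ m := by
                gcongr
                linarith [Real.add_one_le_exp 1]
              _ = Real.exp m := Real.exp_one_pow m
          · exact hTn.trans ((Real.log_le_iff_le_exp hnpos).1 hm)
      _ = Real.exp (-(4 * m)) := by
          rw [← Real.exp_add, ← Real.exp_add]
          ring_nf
      _ ≤ Real.exp (-(4 * Real.log n)) := Real.exp_le_exp.2 (by linarith)
      _ = 1 / (n : ℝ) ^ 4 := hexp_log
  have hμB₂ : μ.real B₂ ≤ 1 / (n : ℝ) ^ 4 := by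
    rw [← hexp_log]
    exact measureReal_sum_lt_half_compensator_sub_le
      (f := fun t ω i => min (binLoad J t i ω : ℝ) √n / √n) hQ0 hQ1 hQm hJm hQJ
      (fun t i => ((measurable_binLoad hJm t i).min measurable_const).div_const _)
      (fun t ω i => by positivity)
      (fun t ω i => div_le_one_of_le₀ (min_le_right _ _) (Real.sqrt_nonneg _)) T _
  set S : Set Ω := {ω | c ^ 2 * n / 16 ≤ (collisions J T ω : ℝ)} with hS
  have hcover : Sᶜ ⊆ B₁ ∪ B₂ := by
    intro ω hωS
    by_contra hω
    rw [Set.mem_union, not_or] at hω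
    obtain ⟨hω₁, hω₂⟩ := hω
    simp only [hB₁, Set.mem_iUnion, Set.mem_ofPred_eq, not_exists, not_lt] at hω₁
    simp only [hB₂, Set.mem_ofPred_eq, not_lt] at hω₂
    simp only [hS, Set.mem_compl_iff, Set.mem_ofPred_eq, not_le] at hωS
    have hload : ∀ t ∈ range T, ∀ i, min (binLoad J t i ω : ℝ) √n = binLoad J t i ω := by
      intro t ht i
      refine min_eq_left (le_trans ?_ (binLoad_le_sqrt J T ω (by nlinarith) i))
      exact_mod_cast binLoad_mono J (mem_range.1 ht).le i ω
    have hcol : (∑ t ∈ range T, ∑ i, Q t ω i * binLoad J t i ω) / 2 - 4 * (√n * Real.log n) ≤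
        collisions J T ω := by
      have hs : 0 < √(n : ℝ) := Real.sqrt_pos.2 hnpos
      have hX : ∑ t ∈ range T, min (binLoad J t (J t ω) ω : ℝ) √n / √n =
          (∑ t ∈ range T, (binLoad J t (J t ω) ω : ℝ)) / √n := by
        rw [sum_div]
        exact sum_congr rfl fun t ht => by rw [hload t ht]
      have hD : ∑ t ∈ range T, ∑ i, Q t ω i * (min (binLoad J t i ω : ℝ) √n / √n) =
          (∑ t ∈ range T, ∑ i, Q t ω i * binLoad J t i ω) / √n := by
        simp_rw [sum_div]
        exact sum_congr rfl fun t ht => sum_congr rfl fun i _ => by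
          rw [hload t ht i, mul_div_assoc]
      rw [hX, hD] at hω₂
      rw [le_div_iff₀ hs] at hω₂
      rw [collisions_eq_sum]
      push_cast
      refine le_trans (le_of_eq ?_) hω₂
      field_simp
    have hcor : ∀ t ∈ range T, (∑ s ∈ range t, ∑ i, Q s ω i * Q t ω i) / 2 - 6 * (c ^ 2 / 128) ≤
        ∑ s ∈ range t, Q t ω (J s ω) := by
      intro t ht
      have h := hω₁ _ (hQpool t ω) t ht
      have hpos := hκpos _ (hQpool t ω)
      simp_rw [← mul_div_assoc, ← sum_div] at h
      rw [le_div_iff₀ hpos] at h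
      refine le_trans ?_ h
      have e : ((∑ s ∈ range t, ∑ i, Q s ω i * Q t ω i) / κ / 2 - 6 * m) * κ =
          (∑ s ∈ range t, ∑ i, Q s ω i * Q t ω i) / 2 - 6 * (κ * m) := by
        field_simp
      rw [e]
      linarith
    have hmain := collisions_ge_of_typical (by omega) J (fun t => Q t ω) T κ _ _ ω
      (fun t i => hQ0 t ω i) (fun t => hQ1 t ω) (fun t i => hpk _ (hQpool t ω) i) hcor hcol
    have hTsq : c ^ 2 * n - 2 * c ≤ (T : ℝ) ^ 2 / n := by
      rw [le_div_iff₀ hnpos]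
      nlinarith [sq_nonneg ((T : ℝ) - c * n)]
    have hTκ : (T : ℝ) * κ ≤ n * (c ^ 2 / 128) := by
      refine (mul_le_mul_of_nonneg_left hκ (Nat.cast_nonneg T)).trans ?_
      gcongr
    have hTc : (T : ℝ) * (6 * (c ^ 2 / 128)) ≤ n * (6 * (c ^ 2 / 128)) := by gcongr
    have hpos : 0 < c ^ 2 * n := by positivity
    linarith
  have hone : 1 ≤ μ.real S + μ.real Sᶜ := by
    rw [← probReal_univ (μ := μ), ← Set.union_compl_self S]
    exact measureReal_union_le _ _
  have hcompl : μ.real Sᶜ ≤ 1 / (n : ℝ) ^ 4 + 1 / (n : ℝ) ^ 4 :=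
    (measureReal_mono hcover).trans ((measureReal_union_le _ _).trans (add_le_add hμB₁ hμB₂))
  change 1 - 2 / (n : ℝ) ^ 4 ≤ μ.real S
  have e : 2 / (n : ℝ) ^ 4 = 1 / (n : ℝ) ^ 4 + 1 / (n : ℝ) ^ 4 := by ring
  linarith
end

section
/- Fix δ ∈ (0,1). There exists a constant C = C(δ) > 0 such that the following holds with probability tending to 1 as n → ∞: if k ≥ (3/δ)·log n, m ≥ log n · log₂ log n, and k·m ≥ C·n, then there exist a state space S of size at most 2^m with an initial state s_0 ∈ S, a transition function σ : S × {1,…,n}^k → S, and a choice function a : S × {1,…,n}^k → {1,…,k}, such that when U_1, …, U_{⌊(1−δ)n⌋} are independent random vectors each consisting of k i.i.d. uniform bin indices, the states are defined by s_t = σ(s_{t−1}, U_t), and ball t is placed in bin U_t[a(s_{t−1}, U_t)], all ⌊(1−δ)n⌋ balls land in distinct bins (a perfect allocation with no collisions). -/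
open MeasureTheory Finset

/-- The state of a memory-bounded allocation algorithm after `t` rounds: the state space
is `S`, the initial state is `s0`, the transition function is `σ`, and in round `t` the
algorithm observes the vector `ω t` of `k` offered bins. -/
def memState {S : Type*} {n k b : ℕ} (σ : S → (Fin k → Fin n) → S) (s0 : S)
    (ω : Fin b → Fin k → Fin n) : ℕ → S
  | 0 => s0
  | t + 1 => if h : t < b then σ (memState σ s0 ω t) (ω ⟨t, h⟩) else memState σ s0 ω t

/-- The bin in which ball `t` is placed: the algorithm, in state `memState σ s0 ω t`,
uses the choice function `a` to pick one of the `k` offered bins `ω t`. -/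
def memPlace {S : Type*} {n k b : ℕ} (σ : S → (Fin k → Fin n) → S)
    (a : S → (Fin k → Fin n) → Fin k) (s0 : S)
    (ω : Fin b → Fin k → Fin n) (t : Fin b) : Fin n :=
  ω t (a (memState σ s0 ω t) (ω t))

/-- The uniform probability measure on `Fin n` (for `n ≥ 1`). -/
noncomputable def uniformFin (n : ℕ) : Measure (Fin n) :=
  ((n : ENNReal))⁻¹ • Measure.count


namespace OnlineAllocation

/-- The smallest natural number outside `O`. -/
noncomputable def firstFree (O : Finset ℕ) : ℕ := sInf {x | x ∉ O}

open Classical in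
/-- The smallest offered bin outside `O`, or the first free bin if all offers lie in `O`. -/
noncomputable def nextBin {n k : ℕ} (O : Finset ℕ) (u : Fin k → Fin n) : ℕ :=
  if ∃ i, (u i : ℕ) ∉ O then sInf {x | x ∉ O ∧ ∃ i, (u i : ℕ) = x} else firstFree O

/-- One round in state `(t, O)`: the ball takes `nextBin O u`, and after every `q`-th round the
first free bin is discarded as well. -/
noncomputable def step {n k : ℕ} (q : ℕ) (s : ℕ × Finset ℕ) (u : Fin k → Fin n) :
    ℕ × Finset ℕ :=
  (s.1 + 1,
    if q ∣ s.1 + 1 then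
      insert (firstFree (insert (nextBin s.2 u) s.2)) (insert (nextBin s.2 u) s.2)
    else insert (nextBin s.2 u) s.2)

/-- The free bins preceding all offered free bins. -/
def skipped {n k : ℕ} (O : Finset ℕ) (u : Fin k → Fin n) : Finset ℕ :=
  {x ∈ range n | x ∉ O ∧ ∀ i, (u i : ℕ) ∉ O → x < u i}

theorem exists_notMem_finset (O : Finset ℕ) : {x | x ∉ O}.Nonempty :=
  Infinite.exists_notMem_finset O

theorem firstFree_notMem (O : Finset ℕ) : firstFree O ∉ O :=
  Nat.sInf_mem (exists_notMem_finset O)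

theorem firstFree_le {O : Finset ℕ} {x : ℕ} (hx : x ∉ O) : firstFree O ≤ x :=
  Nat.sInf_le hx

theorem firstFree_le_card (O : Finset ℕ) : firstFree O ≤ O.card := by
  have h : range (firstFree O) ⊆ O := fun x hx => by
    by_contra hxO
    exact absurd (firstFree_le hxO) (by simpa using hx)
  simpa using card_le_card h

theorem nextBin_spec {n k : ℕ} {O : Finset ℕ} {u : Fin k → Fin n} (h : ∃ i, (u i : ℕ) ∉ O) :
    nextBin O u ∉ O ∧ ∃ i, (u i : ℕ) = nextBin O u := by
  rw [nextBin, if_pos h]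
  obtain ⟨i, hi⟩ := h
  exact Nat.sInf_mem (s := {x | x ∉ O ∧ ∃ i, (u i : ℕ) = x}) ⟨u i, hi, i, rfl⟩

theorem nextBin_notMem {n k : ℕ} (O : Finset ℕ) (u : Fin k → Fin n) : nextBin O u ∉ O := by
  by_cases h : ∃ i, (u i : ℕ) ∉ O
  · exact (nextBin_spec h).1
  · rw [nextBin, if_neg h]
    exact firstFree_notMem O

theorem nextBin_le {n k : ℕ} (O : Finset ℕ) (u : Fin k → Fin n) :
    nextBin O u ≤ O.card + (skipped O u).card := by
  by_cases h : ∃ i, (u i : ℕ) ∉ O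
  · have hsub : range (nextBin O u) ⊆ O ∪ skipped O u := by
      intro x hx
      obtain ⟨i, hi⟩ := (nextBin_spec h).2
      have hxn : x < nextBin O u := by simpa using hx
      by_cases hxO : x ∈ O
      · simp [hxO]
      · refine mem_union_right _ (mem_filter.2 ⟨mem_range.2 ?_, hxO, fun j hj => ?_⟩)
        · have := (u i).2
          omega
        · refine hxn.trans_le ?_
          rw [nextBin, if_pos h]
          exact Nat.sInf_le ⟨hj, j, rfl⟩
    simpa using (card_le_card hsub).trans (card_union_le _ _)
  · rw [nextBin, if_neg h]
    exact (firstFree_le_card O).trans (Nat.le_add_right _ _)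

theorem card_step {n k q : ℕ} (s : ℕ × Finset ℕ) (u : Fin k → Fin n)
    (hs : s.2.card = s.1 + s.1 / q) :
    (step q s u).2.card = (step q s u).1 + (step q s u).1 / q := by
  have h1 := card_insert_of_notMem (nextBin_notMem s.2 u)
  have h2 := card_insert_of_notMem (firstFree_notMem (insert (nextBin s.2 u) s.2))
  have h3 := Nat.succ_div (a := s.1) (b := q)
  simp only [step]
  split_ifs with h
  · rw [if_pos h] at h3
    omega
  · rw [if_neg h] at h3
    omega

theorem insert_nextBin_subset_step {n k q : ℕ} (s : ℕ × Finset ℕ) (u : Fin k → Fin n) :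
    insert (nextBin s.2 u) s.2 ⊆ (step q s u).2 := by
  simp only [step]
  split_ifs
  · exact subset_insert _ _
  · exact Subset.rfl

/-- The excess of occupied bins beyond `c` grows by at most the number of skipped bins. -/
theorem sum_step_le {n k q : ℕ} (s : ℕ × Finset ℕ) (u : Fin k → Fin n)
    (hs : s.2.card = s.1 + s.1 / q) {c : ℕ} (hc : (s.1 + 1) + (s.1 + 1) / q ≤ c) :
    ∑ a ∈ (step q s u).2, (a - c) ≤
      ∑ a ∈ s.2, (a - c) + ((skipped s.2 u).card + (s.1 + s.1 / q) - c) := by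
  have h0 := nextBin_le s.2 u
  have h1 : ∑ a ∈ insert (nextBin s.2 u) s.2, (a - c) ≤
      ∑ a ∈ s.2, (a - c) + ((skipped s.2 u).card + (s.1 + s.1 / q) - c) := by
    rw [sum_insert (nextBin_notMem s.2 u)]
    omega
  have h2 := firstFree_le_card (insert (nextBin s.2 u) s.2)
  rw [card_insert_of_notMem (nextBin_notMem s.2 u)] at h2
  have h3 := Nat.succ_div (a := s.1) (b := q)
  simp only [step]
  split_ifs with h
  · rw [if_pos h] at h3
    rw [sum_insert (firstFree_notMem _)]
    omega
  · exact h1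

/-- Free bins below `c`. -/
def holes (c : ℕ) (O : Finset ℕ) : Finset ℕ := range c \ O

theorem card_holes_step_le {n k q : ℕ} (s : ℕ × Finset ℕ) (u : Fin k → Fin n) (c : ℕ) :
    (holes c (step q s u).2).card ≤
      (holes c s.2).card - ((s.1 + 1) / q - s.1 / q) := by
  have h1 : (holes c (insert (nextBin s.2 u) s.2)).card ≤ (holes c s.2).card :=
    card_le_card (sdiff_subset_sdiff Subset.rfl (subset_insert _ _))
  have h3 := Nat.succ_div (a := s.1) (b := q)
  simp only [step]
  split_ifs with h
  · rw [if_pos h] at h3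
    set O := insert (nextBin s.2 u) s.2
    have h4 : (holes c (insert (firstFree O) O)).card ≤ (holes c O).card - 1 := by
      rcases (holes c O).eq_empty_or_nonempty with he | ⟨x, hx⟩
      · have : holes c (insert (firstFree O) O) ⊆ holes c O :=
          sdiff_subset_sdiff Subset.rfl (subset_insert _ _)
        rw [he, subset_empty] at this
        simp [this]
      · have hx' : x < c ∧ x ∉ O := by simpa [holes] using hx
        have hm : firstFree O ∈ holes c O := by
          simp only [holes, mem_sdiff, mem_range]
          exact ⟨(firstFree_le hx'.2).trans_lt hx'.1, firstFree_notMem O⟩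
        rw [← card_erase_of_mem hm]
        refine card_le_card fun y hy => ?_
        simp only [holes, mem_sdiff, mem_range, mem_insert, mem_erase, not_or] at hy ⊢
        exact ⟨hy.2.1, hy.1, hy.2.2⟩
    omega
  · rw [if_neg h] at h3
    omega

/-- A set of size `c` has as many holes below `c` as elements from `c` on. -/
theorem card_holes_card_le {O : Finset ℕ} {l : ℕ} (hl : 0 < l)
    (h : ∑ a ∈ O, (a - O.card) ≤ 8 * l ^ 2) : (holes O.card O).card ≤ 6 * l := by
  set c := O.card with hc
  have h1 : (holes c O).card = (O \ range c).card := by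
    have e1 := card_sdiff_add_card_inter (range c) O
    have e2 := card_sdiff_add_card_inter O (range c)
    rw [inter_comm] at e2
    rw [card_range] at e1
    simp only [holes]
    omega
  have h2 : O \ range c ⊆ Ico c (c + 4 * l) ∪ {a ∈ O | 4 * l ≤ a - c} := by
    intro a ha
    simp only [mem_sdiff, mem_range, mem_union, mem_Ico, mem_filter] at ha ⊢
    by_cases h4 : 4 * l ≤ a - c
    · exact Or.inr ⟨ha.1, h4⟩
    · left; omega
  have h3 : ({a ∈ O | 4 * l ≤ a - c}).card * (4 * l) ≤ 8 * l ^ 2 := by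
    rw [← smul_eq_mul]
    calc _ ≤ ∑ a ∈ O with 4 * l ≤ a - c, (a - c) :=
          card_nsmul_le_sum _ _ _ fun a ha => (mem_filter.1 ha).2
      _ ≤ ∑ a ∈ O, (a - c) := sum_le_sum_of_subset (filter_subset _ _)
      _ ≤ _ := h
  have h4 : ({a ∈ O | 4 * l ≤ a - c}).card ≤ 2 * l := by
    nlinarith
  have h5 := (card_le_card h2).trans (card_union_le _ _)
  rw [Nat.card_Ico] at h5
  omega

section Trajectory

variable {S : Type*} {n k b : ℕ}

theorem memState_succ (σ : S → (Fin k → Fin n) → S) (s0 : S) (ω : Fin b → Fin k → Fin n)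
    {t : ℕ} (h : t < b) :
    memState σ s0 ω (t + 1) = σ (memState σ s0 ω t) (ω ⟨t, h⟩) := by
  rw [memState, dif_pos h]

theorem memState_update (σ : S → (Fin k → Fin n) → S) (s0 : S) (ω : Fin b → Fin k → Fin n)
    (i : Fin b) (u : Fin k → Fin n) {s : ℕ} (hs : s ≤ i) :
    memState σ s0 (Function.update ω i u) s = memState σ s0 ω s := by
  induction s with
  | zero => rfl
  | succ s ih =>
    have hb : s < b := lt_trans (Nat.lt_of_succ_le hs) i.2
    rw [memState_succ _ _ _ hb, memState_succ _ _ _ hb, ih (by omega),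
      Function.update_of_ne]
    exact fun h => absurd (congrArg Fin.val h) (by simp; omega)

/-- The trajectory of the algorithm with unbounded memory. -/
noncomputable def traj (q : ℕ) (ω : Fin b → Fin k → Fin n) (t : ℕ) : ℕ × Finset ℕ :=
  memState (step q) (0, ∅) ω t

/-- The number of free bins skipped in round `s`. -/
noncomputable def skip (q : ℕ) (ω : Fin b → Fin k → Fin n) (s : ℕ) : ℕ :=
  if h : s < b then (skipped (traj q ω s).2 (ω ⟨s, h⟩)).card else 0

variable (q : ℕ) (ω : Fin b → Fin k → Fin n)

theorem traj_succ {t : ℕ} (h : t < b) : traj q ω (t + 1) = step q (traj q ω t) (ω ⟨t, h⟩) :=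
  memState_succ _ _ _ h

theorem traj_fst {t : ℕ} (h : t ≤ b) : (traj q ω t).1 = t := by
  induction t with
  | zero => rfl
  | succ t ih => rw [traj_succ q ω h, step, ih (by omega)]

theorem card_traj {t : ℕ} (h : t ≤ b) : (traj q ω t).2.card = t + t / q := by
  suffices (traj q ω t).2.card = (traj q ω t).1 + (traj q ω t).1 / q by
    rwa [traj_fst q ω h] at this
  induction t with
  | zero => simp [traj, memState]
  | succ t ih =>
    rw [traj_succ q ω h]
    exact card_step _ _ (ih (by omega))

theorem traj_mono {s t : ℕ} (hst : s ≤ t) (h : t ≤ b) : (traj q ω s).2 ⊆ (traj q ω t).2 := by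
  induction t, hst using Nat.le_induction with
  | base => exact Subset.rfl
  | succ t _ ih =>
    rw [traj_succ q ω h]
    exact (ih (by omega)).trans
      ((subset_insert _ _).trans (insert_nextBin_subset_step _ _))

theorem sum_traj_le {t : ℕ} (h : t ≤ b) {c : ℕ} (hc : t + t / q ≤ c) :
    ∑ a ∈ (traj q ω t).2, (a - c) ≤ ∑ s ∈ range t, (skip q ω s + (s + s / q) - c) := by
  induction t with
  | zero => simp [traj, memState]
  | succ t ih =>
    have h1 := sum_step_le (q := q) (traj q ω t) (ω ⟨t, h⟩) (c := c)
    rw [traj_fst q ω (by omega)] at h1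
    have h2 := Nat.succ_div (a := t) (b := q)
    rw [traj_succ q ω h, sum_range_succ]
    refine (h1 (card_traj q ω (by omega)) hc).trans (add_le_add (ih (by omega) ?_) ?_)
    · split_ifs at h2 <;> omega
    · rw [skip, dif_pos (show t < b from h)]

theorem card_holes_traj_le {s t : ℕ} (hst : s ≤ t) (h : t ≤ b) (c : ℕ) :
    (holes c (traj q ω t).2).card ≤ (holes c (traj q ω s).2).card - (t / q - s / q) := by
  induction t, hst using Nat.le_induction with
  | base => simp
  | succ t hst ih =>
    have h1 := card_holes_step_le (q := q) (traj q ω t) (ω ⟨t, h⟩) c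
    rw [traj_fst q ω (by omega)] at h1
    rw [traj_succ q ω h]
    have h2 := ih (by omega)
    have h3 := Nat.div_le_div_right (c := q) hst
    have h4 := Nat.div_le_div_right (c := q) (Nat.le_succ t)
    omega

theorem mem_traj_of_lt {l : ℕ} (hl : 0 < l) (hq : 0 < q)
    (hE : ∀ t ≤ b, ∑ a ∈ (traj q ω t).2, (a - (t + t / q)) ≤ 8 * l ^ 2)
    {t : ℕ} (h : t ≤ b) {x : ℕ} (hx : x < t + t / q - 6 * l * (q + 1)) :
    x ∈ (traj q ω t).2 := by
  by_cases ht : t < q * (6 * l)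
  · exfalso
    have : t / q < 6 * l := Nat.div_lt_of_lt_mul ht
    have : 6 * l * (q + 1) = q * (6 * l) + 6 * l := by ring
    omega
  · obtain ⟨s, rfl⟩ := Nat.exists_eq_add_of_le (not_lt.1 ht)
    rw [add_comm (q * (6 * l)) s] at h hx ⊢
    have h1 : (s + q * (6 * l)) / q = s / q + 6 * l := Nat.add_mul_div_left _ _ hq
    have h2 := card_holes_traj_le q ω (Nat.le_add_right s (q * (6 * l))) h (s + s / q)
    have h3 := hE s (by omega)
    rw [← card_traj q ω (by omega : s ≤ b)] at h3
    have h4 := card_holes_card_le hl h3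
    rw [card_traj q ω (by omega : s ≤ b)] at h4
    have h5 : holes (s + s / q) (traj q ω (s + q * (6 * l))).2 = ∅ :=
      card_eq_zero.1 (by omega)
    have h6 : 6 * l * (q + 1) = q * (6 * l) + 6 * l := by ring
    by_contra hxn
    have : x ∈ holes (s + s / q) (traj q ω (s + q * (6 * l))).2 := by
      simp only [holes, mem_sdiff, mem_range]
      exact ⟨by omega, hxn⟩
    simp [h5] at this

end Trajectory

section Counting

variable {n k : ℕ}

/-- The number of offer vectors that skip at least `g` bins. -/
theorem card_le_card_skipped_le (O : Finset ℕ) (g : ℕ) :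
    #{u : Fin k → Fin n | g ≤ #(skipped O u)} ≤ (n - g) ^ k := by
  rcases ({u : Fin k → Fin n | g ≤ #(skipped O u)} : Finset _).eq_empty_or_nonempty with he | hne
  · simp [he]
  obtain ⟨v, hv, hmin⟩ := exists_min_image _ (fun u => #(skipped O u)) hne
  have hv' : g ≤ #(skipped O v) := (mem_filter.1 hv).2
  have hsub : ({u : Fin k → Fin n | g ≤ #(skipped O u)} : Finset _) ⊆
      Fintype.piFinset fun _ : Fin k => {x : Fin n | (x : ℕ) ∉ skipped O v} := by
    intro u hu
    rw [Fintype.mem_piFinset]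
    intro i
    simp only [mem_filter, mem_univ, true_and]
    intro hi
    have hiO : (u i : ℕ) ∉ O := (mem_filter.1 hi).2.1
    have hlt : skipped O u ⊂ skipped O v := by
      refine (ssubset_iff_of_subset fun y hy => ?_).2 ⟨u i, hi, fun h => ?_⟩
      · refine mem_filter.2 ⟨(mem_filter.1 hy).1, (mem_filter.1 hy).2.1, fun j hj => ?_⟩
        exact ((mem_filter.1 hy).2.2 i hiO).trans ((mem_filter.1 hi).2.2 j hj)
      · exact lt_irrefl _ ((mem_filter.1 h).2.2 i hiO)
    exact absurd (card_lt_card hlt) (not_lt.2 (hmin u hu))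
  refine (card_le_card hsub).trans ?_
  rw [Fintype.card_piFinset_const]
  refine Nat.pow_le_pow_left ?_ k
  have h1 : #{x : Fin n | (x : ℕ) ∈ skipped O v} = #(skipped O v) := by
    rw [← card_map Fin.valEmbedding]
    congr 1
    ext x
    simp only [mem_map, mem_filter, mem_univ, true_and, Fin.valEmbedding_apply]
    refine ⟨fun ⟨a, ha, hax⟩ => hax ▸ ha, fun hx => ⟨⟨x, mem_range.1 (mem_filter.1 hx).1⟩, hx, rfl⟩⟩
  have h2 := card_filter_add_card_filter_not (s := (univ : Finset (Fin n)))
    (fun x : Fin n => (x : ℕ) ∈ skipped O v)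
  rw [card_univ, Fintype.card_fin] at h2
  omega

theorem card_skipped_le (O : Finset ℕ) (u : Fin k → Fin n) : #(skipped O u) ≤ n := by
  have h : skipped O u ⊆ range n := filter_subset _ _
  simpa only [card_range] using card_le_card h

/-- The number of offer vectors all of whose entries are occupied. -/
theorem card_forall_mem_le (O : Finset ℕ) :
    #{u : Fin k → Fin n | ∀ i, (u i : ℕ) ∈ O} ≤ #O ^ k := by
  have hsub : ({u : Fin k → Fin n | ∀ i, (u i : ℕ) ∈ O} : Finset _) ⊆
      Fintype.piFinset fun _ : Fin k => {x : Fin n | (x : ℕ) ∈ O} := by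
    intro u hu
    rw [Fintype.mem_piFinset]
    intro i
    simpa using (mem_filter.1 hu).2 i
  refine (card_le_card hsub).trans ?_
  rw [Fintype.card_piFinset_const]
  refine Nat.pow_le_pow_left ?_ k
  rw [← card_map Fin.valEmbedding]
  refine card_le_card fun x hx => ?_
  obtain ⟨a, ha, rfl⟩ := mem_map.1 hx
  exact (mem_filter.1 ha).2

theorem one_div_one_sub_exp_le {l : ℕ} (hl : 0 < l) :
    1 / (1 - Real.exp (-(1 / (2 * l : ℝ)))) ≤ 1 + 2 * l := by
  have hl' : (0 : ℝ) < l := by exact_mod_cast hl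
  have h1 : 1 + 1 / (2 * l : ℝ) ≤ Real.exp (1 / (2 * l : ℝ)) := by
    linarith [Real.add_one_le_exp (1 / (2 * l : ℝ))]
  have h2 : Real.exp (-(1 / (2 * l : ℝ))) ≤ (2 * l) / (1 + 2 * l) := by
    rw [Real.exp_neg, inv_le_comm₀ (Real.exp_pos _) (by positivity)]
    refine le_trans (le_of_eq ?_) h1
    field_simp
    ring
  have h3 : 1 - (2 * l : ℝ) / (1 + 2 * l) = 1 / (1 + 2 * l) := by
    field_simp
    ring
  calc _ ≤ 1 / (1 / (1 + 2 * l : ℝ)) := by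
        apply one_div_le_one_div_of_le (by positivity)
        linarith
    _ = _ := by simp

theorem sum_pow_le_one_div {y : ℝ} (h0 : 0 ≤ y) (h1 : y < 1) (N : ℕ) :
    ∑ i ∈ range N, y ^ i ≤ 1 / (1 - y) := by
  rw [geom_sum_eq h1.ne, ← neg_div_neg_eq]
  rw [neg_sub, neg_sub]
  exact div_le_div_of_nonneg_right (by linarith [pow_nonneg h0 N]) (by linarith)

/-- Exponential moment of the number of skipped bins in excess of `r`. -/
theorem sum_exp_skipped_le {l : ℕ} (hl : 0 < l) (hn : 0 < n) (hk : n ≤ k * l) (O : Finset ℕ)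
    (r : ℕ) :
    ∑ u : Fin k → Fin n, Real.exp (1 / (2 * l : ℝ)) ^ (#(skipped O u) - r) ≤
      (1 + Real.exp (-(1 / (2 * l : ℝ))) ^ r) * (n : ℝ) ^ k := by
  have hl' : (0 : ℝ) < l := by exact_mod_cast hl
  have hn' : (0 : ℝ) < n := by exact_mod_cast hn
  set x := Real.exp (1 / (2 * l : ℝ)) with hx
  set y := Real.exp (-(1 / (2 * l : ℝ))) with hy
  have hxy : x * y = 1 := by rw [hx, hy, ← Real.exp_add]; simp
  have hy0 : 0 < y := Real.exp_pos _
  have hx1 : 1 < x := Real.one_lt_exp_iff.2 (by positivity)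
  have hy1 : y < 1 := by
    rw [hy, Real.exp_lt_one_iff]
    have : 0 < 1 / (2 * l : ℝ) := by positivity
    linarith
  have hpt : ∀ u : Fin k → Fin n, x ^ (#(skipped O u) - r) =
      1 + (x - 1) * ∑ i ∈ range n, if r + i + 1 ≤ #(skipped O u) then x ^ i else 0 := by
    intro u
    have h1 : ∑ i ∈ range n, (if r + i + 1 ≤ #(skipped O u) then x ^ i else 0) =
        ∑ i ∈ range (#(skipped O u) - r), x ^ i := by
      rw [← sum_filter]
      refine sum_congr ?_ fun _ _ => rfl
      ext i
      have := card_skipped_le O u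
      simp only [mem_filter, mem_range]
      omega
    rw [h1, mul_comm, geom_sum_mul]
    ring
  have htail : ∀ g : ℕ, (#{u : Fin k → Fin n | g ≤ #(skipped O u)} : ℝ) ≤
      y ^ (2 * g) * (n : ℝ) ^ k := by
    intro g
    have hyg : y ^ (2 * g) = Real.exp (-(g / l : ℝ)) := by
      rw [hy, ← Real.exp_nat_mul]
      congr 1
      push_cast
      field_simp
    by_cases hg : g ≤ n
    · calc (#{u : Fin k → Fin n | g ≤ #(skipped O u)} : ℝ) ≤ ((n - g : ℕ) : ℝ) ^ k := by
            exact_mod_cast card_le_card_skipped_le O g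
        _ = (1 - g / n : ℝ) ^ k * (n : ℝ) ^ k := by
            rw [← mul_pow, Nat.cast_sub hg]
            congr 1
            field_simp
        _ ≤ Real.exp (-(g / n : ℝ)) ^ k * (n : ℝ) ^ k := by
            have h2 : (g / n : ℝ) ≤ 1 := by
              rw [div_le_one hn']
              exact_mod_cast hg
            gcongr
            linarith [Real.add_one_le_exp (-(g / n : ℝ))]
        _ ≤ _ := by
            rw [hyg, ← Real.exp_nat_mul]
            gcongr
            rw [mul_neg, neg_le_neg_iff, mul_div_assoc', div_le_div_iff₀ hl' hn']
            have : (n : ℝ) ≤ k * l := by exact_mod_cast hk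
            nlinarith [(Nat.cast_nonneg g : (0 : ℝ) ≤ g)]
    · have : #{u : Fin k → Fin n | g ≤ #(skipped O u)} = 0 := by
        rw [card_eq_zero, filter_eq_empty_iff]
        intro u _ h
        have := card_skipped_le O u
        omega
      rw [this]
      push_cast
      positivity
  have hcard : (#(univ : Finset (Fin k → Fin n)) : ℝ) = (n : ℝ) ^ k := by
    simp
  calc ∑ u : Fin k → Fin n, x ^ (#(skipped O u) - r)
      = (n : ℝ) ^ k + (x - 1) * ∑ i ∈ range n,
          x ^ i * #{u : Fin k → Fin n | r + i + 1 ≤ #(skipped O u)} := by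
        simp_rw [hpt]
        rw [sum_add_distrib, ← mul_sum, sum_comm, sum_const, nsmul_eq_mul, mul_one, hcard]
        congr 2
        refine sum_congr rfl fun i _ => ?_
        rw [← sum_filter, sum_const, nsmul_eq_mul, mul_comm]
    _ ≤ (n : ℝ) ^ k + (x - 1) * ∑ i ∈ range n,
          x ^ i * (y ^ (2 * (r + i + 1)) * (n : ℝ) ^ k) := by
        gcongr with i _
        exact htail _
    _ = (n : ℝ) ^ k + (x - 1) * (y ^ (2 * r + 2) * (n : ℝ) ^ k * ∑ i ∈ range n, y ^ i) := by
        congr 2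
        rw [mul_sum]
        refine sum_congr rfl fun i _ => ?_
        have : x ^ i * y ^ i = 1 := by rw [← mul_pow, hxy, one_pow]
        calc _ = (x ^ i * y ^ i) * (y ^ (2 * r + 2) * (n : ℝ) ^ k * y ^ i) := by ring
          _ = _ := by rw [this, one_mul]
    _ ≤ (n : ℝ) ^ k + (x - 1) * (y ^ (2 * r + 2) * (n : ℝ) ^ k * (1 / (1 - y))) := by
        gcongr
        exact sum_pow_le_one_div hy0.le hy1 n
    _ = (1 + y ^ (2 * r + 1)) * (n : ℝ) ^ k := by
        have h1 : (x - 1) * y = 1 - y := by linarith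
        have h2 : (1 - y) ≠ 0 := by linarith
        calc _ = (n : ℝ) ^ k + ((x - 1) * y) * (1 / (1 - y)) * (y ^ (2 * r + 1) * (n : ℝ) ^ k) := by
              ring
          _ = _ := by rw [h1, mul_one_div_cancel h2]; ring
    _ ≤ _ := by
        gcongr ?_ * _
        gcongr 1 + ?_
        exact pow_le_pow_of_le_one hy0.le hy1.le (by omega)

end Counting

section Resampling

variable {Ω : Type*} [Fintype Ω] {b : ℕ}

theorem sum_sum_update (i : Fin b) (F : (Fin b → Ω) → ℝ) :
    ∑ ω, ∑ u, F (Function.update ω i u) = Fintype.card Ω * ∑ ω, F ω := by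
  have hinv : Function.Involutive
      (fun p : (Fin b → Ω) × Ω => (Function.update p.1 i p.2, p.1 i)) := by
    rintro ⟨ω, u⟩
    simp
  calc ∑ ω, ∑ u, F (Function.update ω i u)
      = ∑ p : (Fin b → Ω) × Ω, F (Function.update p.1 i p.2) := by
        rw [Fintype.sum_prod_type]
    _ = ∑ p : (Fin b → Ω) × Ω, F p.1 :=
        Equiv.sum_comp hinv.toPerm fun p : (Fin b → Ω) × Ω => F p.1
    _ = _ := by
        rw [Fintype.sum_prod_type, mul_sum]
        simp

/-- A product of nonnegative adapted factors has mean at most the product of uniform bounds for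
the conditional means of the factors. -/
theorem sum_prod_le_prod {X : ℕ → (Fin b → Ω) → ℝ} {c : ℕ → ℝ}
    (hX : ∀ s ω, 0 ≤ X s ω)
    (hdep : ∀ (i : Fin b) (s : ℕ), s < i → ∀ ω u, X s (Function.update ω i u) = X s ω)
    (hc : ∀ (i : Fin b) ω, ∑ u, X i (Function.update ω i u) ≤ c i * Fintype.card Ω)
    (hΩ : 0 < Fintype.card Ω) {t : ℕ} (ht : t ≤ b) :
    ∑ ω, ∏ s ∈ range t, X s ω ≤ (∏ s ∈ range t, c s) * Fintype.card (Fin b → Ω) := by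
  induction t with
  | zero => simp
  | succ t ih =>
    have hΩ' : (0 : ℝ) < Fintype.card Ω := by exact_mod_cast hΩ
    set i : Fin b := ⟨t, ht⟩
    have hc0 : 0 ≤ c t := by
      obtain ⟨u₀⟩ := Fintype.card_pos_iff.1 hΩ
      have h1 : 0 ≤ c t * Fintype.card Ω :=
        (sum_nonneg fun u _ => hX _ _).trans (hc i fun _ => u₀)
      exact nonneg_of_mul_nonneg_left h1 hΩ'
    refine le_of_mul_le_mul_left ?_ hΩ'
    rw [← sum_sum_update i]
    calc ∑ ω, ∑ u, ∏ s ∈ range (t + 1), X s (Function.update ω i u)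
        = ∑ ω, (∏ s ∈ range t, X s ω) * ∑ u, X t (Function.update ω i u) := by
          refine sum_congr rfl fun ω _ => ?_
          rw [mul_sum]
          refine sum_congr rfl fun u _ => ?_
          rw [prod_range_succ]
          congr 1
          exact prod_congr rfl fun s hs => hdep i s (by simpa [i] using hs) ω u
      _ ≤ ∑ ω, (∏ s ∈ range t, X s ω) * (c t * Fintype.card Ω) := by
          gcongr with ω _
          · exact prod_nonneg fun s _ => hX s ω
          · exact hc i ω
      _ = (∑ ω, ∏ s ∈ range t, X s ω) * (c t * Fintype.card Ω) := by rw [sum_mul]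
      _ ≤ ((∏ s ∈ range t, c s) * Fintype.card (Fin b → Ω)) * (c t * Fintype.card Ω) := by
          gcongr
          exact ih (by omega)
      _ = _ := by rw [prod_range_succ]; ring

end Resampling

section Probability

variable {n k b : ℕ} (q : ℕ)

theorem traj_update (ω : Fin b → Fin k → Fin n) (i : Fin b) (u : Fin k → Fin n) {s : ℕ}
    (hs : s ≤ i) : traj q (Function.update ω i u) s = traj q ω s :=
  memState_update _ _ _ _ _ hs

theorem skip_update_of_lt (ω : Fin b → Fin k → Fin n) (i : Fin b) (u : Fin k → Fin n) {s : ℕ}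
    (hs : s < i) : skip q (Function.update ω i u) s = skip q ω s := by
  have hb : s < b := hs.trans i.2
  rw [skip, skip, dif_pos hb, dif_pos hb, traj_update q ω i u hs.le, Function.update_of_ne]
  exact fun h => absurd (congrArg Fin.val h) (by simp; omega)

theorem skip_update_self (ω : Fin b → Fin k → Fin n) (i : Fin b) (u : Fin k → Fin n) :
    skip q (Function.update ω i u) i = #(skipped (traj q ω i).2 u) := by
  rw [skip, dif_pos i.2, traj_update q ω i u le_rfl]
  simp

theorem prod_one_add_pow_le {y : ℝ} (h0 : 0 ≤ y) (h1 : y < 1) (N : ℕ) :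
    ∏ j ∈ range N, (1 + y ^ j) ≤ Real.exp (1 / (1 - y)) := by
  calc ∏ j ∈ range N, (1 + y ^ j) ≤ ∏ j ∈ range N, Real.exp (y ^ j) := by
        refine prod_le_prod (fun j _ => by positivity) fun j _ => ?_
        linarith [Real.add_one_le_exp (y ^ j)]
    _ = Real.exp (∑ j ∈ range N, y ^ j) := (Real.exp_sum _ _).symm
    _ ≤ _ := Real.exp_le_exp.2 (sum_pow_le_one_div h0 h1 N)

theorem exp_neg_one_div_lt_one {l : ℕ} (hl : 0 < l) : Real.exp (-(1 / (2 * l : ℝ))) < 1 := by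
  have : 0 < 1 / (2 * l : ℝ) := by positivity
  rw [Real.exp_lt_one_iff]
  linarith

theorem exp_one_div_pow {l : ℕ} (hl : 0 < l) :
    Real.exp (1 / (2 * l : ℝ)) ^ (8 * l ^ 2) = Real.exp (4 * l) := by
  have hl' : (0 : ℝ) < l := by exact_mod_cast hl
  rw [← Real.exp_nat_mul]
  congr 1
  push_cast
  field_simp
  ring

theorem card_sum_skip_ge_le {l : ℕ} (hl : 0 < l) (hn : 0 < n) (hk : n ≤ k * l) {t : ℕ}
    (ht : t ≤ b) :
    (#{ω : Fin b → Fin k → Fin n | 8 * l ^ 2 ≤ ∑ s ∈ range t, (skip q ω s - (t - s))} : ℝ) ≤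
      Real.exp (1 - 2 * l) * Fintype.card (Fin b → Fin k → Fin n) := by
  have hcardΩ : (Fintype.card (Fin k → Fin n) : ℝ) = (n : ℝ) ^ k := by simp
  have hposΩ : 0 < Fintype.card (Fin k → Fin n) := by
    rw [Fintype.card_fun, Fintype.card_fin]
    exact pow_pos (by simpa using hn) _
  set x := Real.exp (1 / (2 * l : ℝ)) with hx
  set y := Real.exp (-(1 / (2 * l : ℝ))) with hy
  have hx1 : 1 ≤ x := Real.one_le_exp (by positivity)
  have hy0 : 0 < y := Real.exp_pos _
  have hy1 : y < 1 := exp_neg_one_div_lt_one hl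
  have hmain := sum_prod_le_prod (X := fun s ω => x ^ (skip q ω s - (t - s)))
    (c := fun s => 1 + y ^ (t - s)) (fun s ω => by positivity)
    (fun i s hs ω u => by simp only [skip_update_of_lt q ω i u hs])
    (fun i ω => by
      simp only [skip_update_self, hcardΩ]
      exact sum_exp_skipped_le hl hn hk _ _) hposΩ ht
  have hprod : ∏ s ∈ range t, (1 + y ^ (t - s)) ≤ Real.exp (1 + 2 * l) := by
    calc ∏ s ∈ range t, (1 + y ^ (t - s)) ≤ ∏ s ∈ range t, (1 + y ^ (t - 1 - s)) := by
          refine prod_le_prod (fun j _ => by positivity) fun j _ => ?_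
          gcongr 1 + ?_
          exact pow_le_pow_of_le_one hy0.le hy1.le (by omega)
      _ = ∏ s ∈ range t, (1 + y ^ s) := prod_range_reflect (fun s => 1 + y ^ s) t
      _ ≤ Real.exp (1 / (1 - y)) := prod_one_add_pow_le hy0.le hy1 t
      _ ≤ _ := Real.exp_le_exp.2 (one_div_one_sub_exp_le hl)
  have hmarkov : (#{ω : Fin b → Fin k → Fin n |
      8 * l ^ 2 ≤ ∑ s ∈ range t, (skip q ω s - (t - s))} : ℝ) * Real.exp (4 * l) ≤
      ∑ ω : Fin b → Fin k → Fin n, ∏ s ∈ range t, x ^ (skip q ω s - (t - s)) := by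
    rw [← nsmul_eq_mul]
    refine (card_nsmul_le_sum _ (fun ω => ∏ s ∈ range t, x ^ (skip q ω s - (t - s))) _
      fun ω hω => ?_).trans (sum_le_sum_of_subset_of_nonneg (filter_subset _ _)
        fun ω _ _ => prod_nonneg fun s _ => by positivity)
    rw [prod_pow_eq_pow_sum, ← exp_one_div_pow hl]
    exact pow_le_pow_right₀ hx1 (mem_filter.1 hω).2
  have hexp : Real.exp (1 + 2 * l) = Real.exp (1 - 2 * l) * Real.exp (4 * l) := by
    rw [← Real.exp_add]
    congr 1
    ring
  refine le_of_mul_le_mul_right ?_ (Real.exp_pos (4 * (l : ℝ)))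
  calc _ ≤ _ := hmarkov
    _ ≤ _ := hmain
    _ ≤ Real.exp (1 + 2 * l) * Fintype.card (Fin b → Fin k → Fin n) := by gcongr
    _ = _ := by rw [hexp]; ring

theorem card_all_occupied_le (hn : 0 < n) {β : ℝ} (i : Fin b)
    (hβ : ((i + i / q : ℕ) : ℝ) ≤ β * n) :
    (#{ω : Fin b → Fin k → Fin n | ∀ j, (ω i j : ℕ) ∈ (traj q ω i).2} : ℝ) ≤
      β ^ k * Fintype.card (Fin b → Fin k → Fin n) := by
  classical
  have hcardΩ : (Fintype.card (Fin k → Fin n) : ℝ) = (n : ℝ) ^ k := by simp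
  have hn' : (0 : ℝ) < n := by exact_mod_cast hn
  have h1 := sum_sum_update i fun ω : Fin b → Fin k → Fin n =>
    if ∀ j, (ω i j : ℕ) ∈ (traj q ω i).2 then (1 : ℝ) else 0
  simp only [traj_update q _ i _ le_rfl, Function.update_self, sum_boole, hcardΩ] at h1
  refine le_of_mul_le_mul_left ?_ (pow_pos hn' k)
  rw [← h1]
  calc ∑ ω : Fin b → Fin k → Fin n,
        (#{u : Fin k → Fin n | ∀ j, (u j : ℕ) ∈ (traj q ω i).2} : ℝ)
      ≤ ∑ _ω : Fin b → Fin k → Fin n, (β * n) ^ k := by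
        refine sum_le_sum fun ω _ => ?_
        have h2 := card_forall_mem_le (n := n) (k := k) (traj q ω i).2
        rw [card_traj q ω i.2.le] at h2
        calc _ ≤ (((i + i / q : ℕ) ^ k : ℕ) : ℝ) := by exact_mod_cast h2
          _ = ((i + i / q : ℕ) : ℝ) ^ k := by push_cast; rfl
          _ ≤ _ := by gcongr
    _ = _ := by
        rw [sum_const, nsmul_eq_mul, card_univ, mul_pow]
        ring

/-- The trajectory stays compact and never meets an offer without a free bin. -/
def Good (l : ℕ) (ω : Fin b → Fin k → Fin n) : Prop :=
  (∀ t ≤ b, ∑ a ∈ (traj q ω t).2, (a - (t + t / q)) ≤ 8 * l ^ 2) ∧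
    ∀ i : Fin b, ∃ j, (ω i j : ℕ) ∉ (traj q ω i).2

open Classical in
theorem card_not_good_le {l : ℕ} (hl : 0 < l) (hn : 0 < n) (hk : n ≤ k * l) {β : ℝ}
    (hβ : ∀ t < b, ((t + t / q : ℕ) : ℝ) ≤ β * n) :
    (#{ω : Fin b → Fin k → Fin n | ¬ Good q l ω} : ℝ) ≤
      ((b + 1) * Real.exp (1 - 2 * l) + b * β ^ k) *
        Fintype.card (Fin b → Fin k → Fin n) := by
  have hsub : ({ω : Fin b → Fin k → Fin n | ¬ Good q l ω} : Finset _) ⊆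
      ((range (b + 1)).biUnion fun t => {ω : Fin b → Fin k → Fin n |
        8 * l ^ 2 ≤ ∑ s ∈ range t, (skip q ω s - (t - s))}) ∪
      univ.biUnion fun i : Fin b => {ω : Fin b → Fin k → Fin n |
        ∀ j, (ω i j : ℕ) ∈ (traj q ω i).2} := by
    intro ω hω
    by_contra hmem
    simp only [mem_union, mem_biUnion, mem_range, mem_filter, mem_univ, true_and, not_or,
      not_exists, not_and, not_le, not_forall] at hmem
    refine (mem_filter.1 hω).2 ⟨fun t ht => ?_, fun i => hmem.2 i⟩
    refine (sum_traj_le q ω ht le_rfl).trans (le_trans ?_ (hmem.1 t (by omega)).le)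
    refine sum_le_sum fun s hs => ?_
    have hst : s < t := mem_range.1 hs
    have := Nat.div_le_div_right (c := q) hst.le
    omega
  have h1 : (#{ω : Fin b → Fin k → Fin n | ¬ Good q l ω} : ℝ) ≤
      ∑ t ∈ range (b + 1), (#{ω : Fin b → Fin k → Fin n |
        8 * l ^ 2 ≤ ∑ s ∈ range t, (skip q ω s - (t - s))} : ℝ) +
      ∑ i : Fin b, (#{ω : Fin b → Fin k → Fin n |
        ∀ j, (ω i j : ℕ) ∈ (traj q ω i).2} : ℝ) := by
    have h2 := (card_le_card hsub).trans ((card_union_le _ _).trans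
      (add_le_add card_biUnion_le card_biUnion_le))
    exact_mod_cast h2
  refine h1.trans ?_
  calc _ ≤ ∑ t ∈ range (b + 1), Real.exp (1 - 2 * l) * Fintype.card (Fin b → Fin k → Fin n) +
        ∑ i : Fin b, β ^ k * Fintype.card (Fin b → Fin k → Fin n) := by
        gcongr with t ht i _
        · exact card_sum_skip_ge_le q hl hn hk (by simpa [Nat.lt_succ_iff] using ht)
        · exact card_all_occupied_le q hn i (hβ i i.2)
    _ = _ := by
        rw [sum_const, sum_const, card_range, card_univ, Fintype.card_fin]
        simp only [nsmul_eq_mul]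
        push_cast
        ring

end Probability

section CompactStates

/-- Finite sets of naturals with bounded sum are few. -/
theorem card_sum_le_le {l : ℕ} (hl : 0 < l) (N : ℕ) :
    (#{T ∈ (range N).powerset | ∑ a ∈ T, a ≤ 8 * l ^ 2} : ℝ) ≤ Real.exp (6 * l + 1) := by
  set x := Real.exp (1 / (2 * l : ℝ)) with hx
  set y := Real.exp (-(1 / (2 * l : ℝ))) with hy
  have hxy : x * y = 1 := by rw [hx, hy, ← Real.exp_add]; simp
  have hx1 : 1 ≤ x := Real.one_le_exp (by positivity)
  have hy0 : 0 < y := Real.exp_pos _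
  have hy1 : y < 1 := exp_neg_one_div_lt_one hl
  calc (#{T ∈ (range N).powerset | ∑ a ∈ T, a ≤ 8 * l ^ 2} : ℝ)
      = ∑ T ∈ (range N).powerset with ∑ a ∈ T, a ≤ 8 * l ^ 2, (1 : ℝ) := by simp
    _ ≤ ∑ T ∈ (range N).powerset with ∑ a ∈ T, a ≤ 8 * l ^ 2,
          x ^ (8 * l ^ 2) * ∏ a ∈ T, y ^ a := by
        refine sum_le_sum fun T hT => ?_
        rw [prod_pow_eq_pow_sum]
        calc (1 : ℝ) = x ^ (∑ a ∈ T, a) * y ^ (∑ a ∈ T, a) := by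
              rw [← mul_pow, hxy, one_pow]
          _ ≤ _ := by
              gcongr
              exact (mem_filter.1 hT).2
    _ ≤ ∑ T ∈ (range N).powerset, x ^ (8 * l ^ 2) * ∏ a ∈ T, y ^ a :=
        sum_le_sum_of_subset_of_nonneg (filter_subset _ _) fun T _ _ => by positivity
    _ = Real.exp (4 * l) * ∏ a ∈ range N, (1 + y ^ a) := by
        rw [← mul_sum, prod_one_add, exp_one_div_pow hl]
    _ ≤ Real.exp (4 * l) * Real.exp (1 + 2 * l) := by
        gcongr
        exact (prod_one_add_pow_le hy0.le hy1 N).trans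
          (Real.exp_le_exp.2 (one_div_one_sub_exp_le hl))
    _ = _ := by
        rw [← Real.exp_add]
        congr 1
        ring

/-- The states that are full up to a window of length `L` and have bounded excess beyond it. -/
def compactStates (q l L b : ℕ) : Finset (ℕ × Finset ℕ) :=
  (range (b + 1) ×ˢ (range L).powerset ×ˢ
    {T ∈ (range (8 * l ^ 2 + 1)).powerset | ∑ a ∈ T, a ≤ 8 * l ^ 2}).image fun p =>
      (p.1, range (p.1 + p.1 / q - L) ∪ p.2.1.image (p.1 + p.1 / q - L + ·) ∪
        p.2.2.image (p.1 + p.1 / q + ·))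

theorem card_compactStates_le {q l L b : ℕ} (hl : 0 < l) :
    (#(compactStates q l L b) : ℝ) ≤ (b + 1) * 2 ^ L * Real.exp (6 * l + 1) := by
  have h1 : #(compactStates q l L b) ≤ _ := card_image_le
  rw [card_product, card_product, card_range, card_powerset, card_range, ← mul_assoc] at h1
  calc (#(compactStates q l L b) : ℝ) ≤ _ := Nat.cast_le.2 h1
    _ = (b + 1) * 2 ^ L * (#{T ∈ (range (8 * l ^ 2 + 1)).powerset | ∑ a ∈ T, a ≤ 8 * l ^ 2} : ℝ) := by
        push_cast
        ring
    _ ≤ _ := by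
        gcongr
        exact card_sum_le_le hl _

theorem mem_compactStates {q l L b t : ℕ} {O : Finset ℕ} (ht : t ≤ b)
    (hfull : ∀ x < t + t / q - L, x ∈ O) (hE : ∑ a ∈ O, (a - (t + t / q)) ≤ 8 * l ^ 2) :
    (t, O) ∈ compactStates q l L b := by
  set c := t + t / q with hc
  have hA : ∑ a ∈ {a ∈ O | c ≤ a}.image (· - c), a = ∑ a ∈ O with c ≤ a, (a - c) := by
    refine sum_image fun a ha a' ha' h => ?_
    have h1 : c ≤ a := (mem_filter.1 ha).2
    have h2 : c ≤ a' := (mem_filter.1 ha').2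
    change a - c = a' - c at h
    omega
  have hA' : ∑ a ∈ {a ∈ O | c ≤ a}.image (· - c), a ≤ 8 * l ^ 2 :=
    hA.trans_le ((sum_le_sum_of_subset (filter_subset _ _)).trans hE)
  refine mem_image.2 ⟨(t, {x ∈ range L | c - L + x ∈ O ∧ c - L + x < c},
    {a ∈ O | c ≤ a}.image (· - c)), ?_, ?_⟩
  · refine mem_product.2 ⟨mem_range.2 (by simpa [Nat.lt_succ_iff] using ht), mem_product.2 ⟨?_, ?_⟩⟩
    · exact mem_powerset.2 (filter_subset _ _)
    · refine mem_filter.2 ⟨mem_powerset.2 fun a ha => mem_range.2 ?_, hA'⟩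
      have := single_le_sum (f := fun a : ℕ => a) (fun _ _ => Nat.zero_le _) ha
      simp only at this
      omega
  · refine Prod.ext rfl ?_
    ext a
    simp only [← hc, mem_union, mem_image, mem_filter, mem_range]
    constructor
    · rintro ((h | ⟨x, hx, rfl⟩) | ⟨x, ⟨z, hz, rfl⟩, rfl⟩)
      · exact hfull a h
      · exact hx.2.1
      · rw [Nat.add_sub_cancel' hz.2]
        exact hz.1
    · intro ha
      by_cases h1 : a < c - L
      · exact Or.inl (Or.inl h1)
      by_cases h2 : a < c
      · have h3 : c - L + (a - (c - L)) = a := by omega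
        exact Or.inl (Or.inr ⟨a - (c - L), ⟨by omega, by rwa [h3], by omega⟩, h3⟩)
      · exact Or.inr ⟨a - c, ⟨a, ⟨ha, by omega⟩, rfl⟩, by omega⟩

theorem traj_mem_compactStates {n k b q l : ℕ} (hl : 0 < l) (hq : 0 < q)
    {ω : Fin b → Fin k → Fin n} (hω : Good q l ω) {t : ℕ} (ht : t ≤ b) :
    traj q ω t ∈ compactStates q l (6 * l * (q + 1)) b := by
  have h := mem_compactStates (q := q) (L := 6 * l * (q + 1)) ht
    (fun x hx => mem_traj_of_lt q ω hl hq hω.1 ht hx) (hω.1 t ht)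
  have h2 : traj q ω t = (t, (traj q ω t).2) := Prod.ext (traj_fst q ω ht) rfl
  rwa [h2]

theorem initial_mem_compactStates (q l L b : ℕ) : (0, ∅) ∈ compactStates q l L b :=
  mem_compactStates (Nat.zero_le b) (by simp) (by simp)

end CompactStates

section BoundedMemory

variable {n k b : ℕ} (q l L : ℕ)

open Classical in
/-- The transition function restricted to compact states. -/
noncomputable def boundedStep (s : compactStates q l L b) (u : Fin k → Fin n) :
    compactStates q l L b :=
  if h : step q s.1 u ∈ compactStates q l L b then ⟨step q s.1 u, h⟩
  else ⟨(0, ∅), initial_mem_compactStates q l L b⟩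

open Classical in
/-- The index of an offer equal to `nextBin`. -/
noncomputable def choose (hk : 0 < k) (s : compactStates q l L b) (u : Fin k → Fin n) : Fin k :=
  if h : ∃ i, (u i : ℕ) = nextBin s.1.2 u then h.choose else ⟨0, hk⟩

variable {q l L}

theorem memState_boundedStep {ω : Fin b → Fin k → Fin n}
    (h : ∀ t ≤ b, traj q ω t ∈ compactStates q l L b) {t : ℕ} (ht : t ≤ b) :
    (memState (boundedStep q l L) ⟨(0, ∅), initial_mem_compactStates q l L b⟩ ω t).1 =
      traj q ω t := by
  induction t with
  | zero => rfl
  | succ t ih =>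
    have h1 := h (t + 1) ht
    rw [traj_succ q ω ht] at h1 ⊢
    rw [memState_succ _ _ _ ht, boundedStep, ih (by omega), dif_pos h1]

theorem injective_memPlace (hk : 0 < k) (hl : 0 < l) (hq : 0 < q) {ω : Fin b → Fin k → Fin n}
    (hω : Good q l ω) :
    Function.Injective fun t => memPlace (boundedStep q l (6 * l * (q + 1)))
      (choose q l (6 * l * (q + 1)) hk) ⟨(0, ∅), initial_mem_compactStates q l _ b⟩ ω t := by
  have hplace : ∀ t : Fin b, (memPlace (boundedStep q l (6 * l * (q + 1)))
      (choose q l (6 * l * (q + 1)) hk) ⟨(0, ∅), initial_mem_compactStates q l _ b⟩ ω t : ℕ) =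
        nextBin (traj q ω t).2 (ω t) := by
    intro t
    have h1 := memState_boundedStep (fun t ht => traj_mem_compactStates hl hq hω ht) t.2.le
    have h2 := (nextBin_spec (hω.2 t)).2
    rw [memPlace, choose, h1, dif_pos h2]
    exact h2.choose_spec
  have hne : ∀ s t : Fin b, s < t →
      nextBin (traj q ω s).2 (ω s) ≠ nextBin (traj q ω t).2 (ω t) := by
    intro s t hst h
    refine nextBin_notMem (traj q ω t).2 (ω t) (h ▸ ?_)
    refine traj_mono q ω (Nat.succ_le_of_lt hst) t.2.le ?_
    rw [traj_succ q ω s.2]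
    exact insert_nextBin_subset_step _ _ (mem_insert_self _ _)
  intro s t hst
  have h := congrArg Fin.val hst
  simp only [hplace] at h
  rcases lt_trichotomy s t with h1 | h1 | h1
  · exact absurd h (hne s t h1)
  · exact h1
  · exact absurd h.symm (hne t s h1)

end BoundedMemory

section Measure

variable {n k b : ℕ}

theorem isProbabilityMeasure_uniformFin (hn : 0 < n) : IsProbabilityMeasure (uniformFin n) := by
  constructor
  rw [uniformFin, Measure.smul_apply, Measure.count_univ, smul_eq_mul, ENat.card_eq_coe_fintype_card,
    Fintype.card_fin]
  exact ENNReal.inv_mul_cancel (by exact_mod_cast hn.ne') (by simp)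

theorem pi_uniformFin_singleton (hn : 0 < n) (ω : Fin b → Fin k → Fin n) :
    (Measure.pi fun _ : Fin b => Measure.pi fun _ : Fin k => uniformFin n) {ω} =
      ((Fintype.card (Fin b → Fin k → Fin n) : ENNReal))⁻¹ := by
  have := isProbabilityMeasure_uniformFin hn
  have h1 : ∀ x : Fin n, uniformFin n {x} = ((n : ENNReal))⁻¹ := by
    intro x
    rw [uniformFin, Measure.smul_apply, Measure.count_singleton, smul_eq_mul, mul_one]
  simp only [Measure.pi_singleton, h1, prod_const, card_univ, Fintype.card_fin, Fintype.card_fun,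
    Nat.cast_pow, ENNReal.inv_pow]

theorem one_sub_le_toReal_pi_uniformFin (hn : 0 < n) {ε : ℝ} {A : Set (Fin b → Fin k → Fin n)}
    {B : Finset (Fin b → Fin k → Fin n)} (hAB : ∀ ω, ω ∉ B → ω ∈ A)
    (hB : (#B : ℝ) ≤ ε * Fintype.card (Fin b → Fin k → Fin n)) :
    1 - ε ≤ ((Measure.pi fun _ : Fin b => Measure.pi fun _ : Fin k => uniformFin n) A).toReal := by
  have := isProbabilityMeasure_uniformFin hn
  set μ := Measure.pi fun _ : Fin b => Measure.pi fun _ : Fin k => uniformFin n with hμ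
  have hpos : (0 : ℝ) < Fintype.card (Fin b → Fin k → Fin n) := by
    have : Nonempty (Fin n) := ⟨⟨0, hn⟩⟩
    exact_mod_cast Fintype.card_pos
  have hBμ : μ.real (B : Set (Fin b → Fin k → Fin n)) ≤ ε := by
    have h1 : μ (B : Set (Fin b → Fin k → Fin n)) =
        #B * ((Fintype.card (Fin b → Fin k → Fin n) : ENNReal))⁻¹ := by
      rw [← sum_measure_singleton]
      simp only [hμ, pi_uniformFin_singleton hn, sum_const, nsmul_eq_mul]
    rw [measureReal_def, h1, ENNReal.toReal_mul, ENNReal.toReal_inv, ENNReal.toReal_natCast,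
      ENNReal.toReal_natCast, ← div_eq_mul_inv, div_le_iff₀ hpos]
    exact hB
  have hcompl : μ.real ((B : Set (Fin b → Fin k → Fin n))ᶜ) = 1 - μ.real B := by
    rw [measureReal_compl B.measurableSet]
    simp
  calc 1 - ε ≤ μ.real ((B : Set (Fin b → Fin k → Fin n))ᶜ) := by rw [hcompl]; linarith
    _ ≤ μ.real A := measureReal_mono fun ω hω => hAB ω (by simpa using hω)

end Measure

section Parameters

theorem card_compactStates_le_two_pow {q l b n m : ℕ} {r : ℝ} (hl : 0 < l) (hb : b ≤ n)
    (hlog : 2 ≤ Real.log n) (hlr : (l : ℝ) ≤ r + Real.log n + 2)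
    (hr : 6 * (q + 2) * r ≤ m / 4)
    (hm : Real.log n * (8 * (6 * (q + 2)) + 8) ≤ m) :
    #(compactStates q l (6 * l * (q + 1)) b) ≤ 2 ^ m := by
  have hn : (0 : ℝ) < n := by
    rcases Nat.eq_zero_or_pos n with rfl | h
    · norm_num at hlog
    · exact_mod_cast h
  have hn1 : (1 : ℝ) ≤ n := by exact_mod_cast hn
  have h1 := card_compactStates_le (q := q) (L := 6 * l * (q + 1)) (b := b) hl
  have h2 : (b + 1 : ℝ) ≤ Real.exp (Real.log n + 1) := by
    have hb' : (b : ℝ) ≤ n := by exact_mod_cast hb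
    rw [Real.exp_add, Real.exp_log hn]
    nlinarith [Real.add_one_le_exp (1 : ℝ)]
  have h3 : (2 : ℝ) ^ (6 * l * (q + 1)) ≤ Real.exp (6 * l * (q + 1)) := by
    calc (2 : ℝ) ^ (6 * l * (q + 1)) ≤ Real.exp 1 ^ (6 * l * (q + 1)) := by
          gcongr
          linarith [Real.add_one_le_exp (1 : ℝ)]
      _ = _ := by
          rw [← Real.exp_nat_mul]
          push_cast
          ring_nf
  have h4 : Real.log n + 1 + 6 * l * (q + 1) + (6 * l + 1) ≤ m * Real.log 2 := by
    have hq : (0 : ℝ) ≤ q := Nat.cast_nonneg q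
    have hm0 : (0 : ℝ) ≤ m := Nat.cast_nonneg m
    have h5 : (6 * (q + 2) : ℝ) * l ≤ 6 * (q + 2) * (r + Real.log n + 2) := by gcongr
    have h6 : (m : ℝ) * (1 / 2) ≤ m * Real.log 2 := by
      gcongr
      linarith [Real.log_two_gt_d9]
    nlinarith
  have h7 : (#(compactStates q l (6 * l * (q + 1)) b) : ℝ) ≤ 2 ^ m := by
    calc _ ≤ _ := h1
      _ ≤ Real.exp (Real.log n + 1) * Real.exp (6 * l * (q + 1)) * Real.exp (6 * l + 1) := by
          gcongr
      _ = Real.exp (Real.log n + 1 + 6 * l * (q + 1) + (6 * l + 1)) := by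
          rw [Real.exp_add _ (6 * (l : ℝ) + 1), Real.exp_add (Real.log n + 1)]
      _ ≤ Real.exp (m * Real.log 2) := Real.exp_le_exp.2 h4
      _ = 2 ^ m := by rw [Real.exp_nat_mul, Real.exp_log two_pos]
  exact_mod_cast h7

theorem round_add_div_le {δ : ℝ} (hδ0 : 0 < δ) {n t : ℕ}
    (ht : (t : ℝ) ≤ (1 - δ) * n) :
    ((t + t / ⌈3 / δ⌉₊ : ℕ) : ℝ) ≤ (1 - 2 * δ / 3) * n := by
  have hq : 3 / δ ≤ (⌈3 / δ⌉₊ : ℝ) := Nat.le_ceil _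
  have h1 : ((t / ⌈3 / δ⌉₊ : ℕ) : ℝ) ≤ t * (δ / 3) := by
    calc ((t / ⌈3 / δ⌉₊ : ℕ) : ℝ) ≤ (t : ℝ) / ⌈3 / δ⌉₊ := Nat.cast_div_le
      _ ≤ t / (3 / δ) := by gcongr
      _ = _ := by field_simp
  push_cast
  have hn : (0 : ℝ) ≤ n := Nat.cast_nonneg n
  nlinarith [mul_nonneg (mul_nonneg hδ0.le hδ0.le) hn]

theorem failure_bound_le {δ ε : ℝ} (hδ0 : 0 < δ) (hδ1 : δ < 1) (hε : 0 < ε) {n k l b : ℕ}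
    (hn : 0 < n) (hb : b ≤ n) (hk : (3 / δ) * Real.log n ≤ k) (hl : Real.log n ≤ l)
    (hnε : 7 / ε ≤ n) :
    (b + 1) * Real.exp (1 - 2 * l) + b * (1 - 2 * δ / 3) ^ k ≤ ε := by
  have hn' : (0 : ℝ) < n := by exact_mod_cast hn
  have hn1 : (1 : ℝ) ≤ n := by exact_mod_cast hn
  have hb' : (b : ℝ) ≤ n := by exact_mod_cast hb
  have hexp : Real.exp (-(2 * Real.log n)) = 1 / (n : ℝ) ^ 2 := by
    rw [Real.exp_neg, one_div, ← Nat.cast_ofNat (R := ℝ) (n := 2), Real.exp_nat_mul,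
      Real.exp_log hn']
  have h1 : Real.exp (1 - 2 * l) ≤ 3 * (1 / (n : ℝ) ^ 2) := by
    rw [← hexp, sub_eq_add_neg, Real.exp_add]
    gcongr
    linarith [Real.exp_one_lt_d9]
  have h2 : (1 - 2 * δ / 3) ^ k ≤ 1 / (n : ℝ) ^ 2 := by
    calc (1 - 2 * δ / 3) ^ k ≤ Real.exp (-(2 * δ / 3)) ^ k := by
          gcongr
          · linarith
          · linarith [Real.add_one_le_exp (-(2 * δ / 3))]
      _ = Real.exp (-(k * (2 * δ / 3))) := by
          rw [← Real.exp_nat_mul, mul_neg]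
      _ ≤ _ := by
          rw [← hexp, Real.exp_le_exp, neg_le_neg_iff]
          calc 2 * Real.log n = (3 / δ * Real.log n) * (2 * δ / 3) := by field_simp
            _ ≤ _ := by gcongr
  have h3 : 0 ≤ (1 - 2 * δ / 3) ^ k := pow_nonneg (by linarith) k
  calc (b + 1) * Real.exp (1 - 2 * l) + b * (1 - 2 * δ / 3) ^ k
      ≤ (n + n) * (3 * (1 / (n : ℝ) ^ 2)) + n * (1 / (n : ℝ) ^ 2) := by
        gcongr
    _ = 7 / n := by
        field_simp
        ring
    _ ≤ ε := by
        rw [div_le_iff₀ hε] at hnε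
        rw [div_le_iff₀ hn']
        linarith

theorem exists_forall_log_bounds (K M : ℝ) :
    ∃ n₀ : ℕ, ∀ n : ℕ, n₀ ≤ n →
      2 ≤ Real.log n ∧ K ≤ Real.logb 2 (Real.log n) ∧ M ≤ n := by
  have h1 : Filter.Tendsto (fun n : ℕ => Real.log n) Filter.atTop Filter.atTop :=
    Real.tendsto_log_atTop.comp tendsto_natCast_atTop_atTop
  have h2 : Filter.Tendsto (fun n : ℕ => Real.logb 2 (Real.log n)) Filter.atTop Filter.atTop :=
    (Real.tendsto_logb_atTop one_lt_two).comp h1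
  have h3 : Filter.Tendsto (fun n : ℕ => (n : ℝ)) Filter.atTop Filter.atTop :=
    tendsto_natCast_atTop_atTop
  exact Filter.eventually_atTop.1 ((h1.eventually_ge_atTop 2).and
    ((h2.eventually_ge_atTop K).and (h3.eventually_ge_atTop M)))

end Parameters

end OnlineAllocation

open OnlineAllocation

/-- Theorem 4 of the paper: fix `δ ∈ (0,1)`. There is a constant `C = C(δ) > 0` such that,
with probability tending to `1` as `n → ∞`, whenever `k ≥ (3/δ) log n`,
`m ≥ log n · log₂ log n` and `k m ≥ C n`, there is a memory-`m` online algorithm (a state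
space of size at most `2^m` with a transition function and a choice function) that, when
presented with `⌊(1-δ)n⌋` rounds of `k` i.i.d. uniform bin choices, places all balls in
distinct bins (a perfect allocation). -/
theorem perfect_matching_upper (δ : ℝ) (hδ0 : 0 < δ) (hδ1 : δ < 1) :
    ∃ C : ℝ, 0 < C ∧ ∀ ε : ℝ, 0 < ε → ∃ n₀ : ℕ, ∀ n : ℕ, n₀ ≤ n → ∀ k m : ℕ,
      (3 / δ) * Real.log n ≤ k →
      Real.log n * Real.logb 2 (Real.log n) ≤ m →
      C * n ≤ (k : ℝ) * m →
      ∃ (S : Type) (_ : Fintype S) (s0 : S)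
        (σ : S → (Fin k → Fin n) → S) (a : S → (Fin k → Fin n) → Fin k),
        Fintype.card S ≤ 2 ^ m ∧
        1 - ε ≤ ((Measure.pi fun _ : Fin (Nat.floor ((1 - δ) * n)) =>
              Measure.pi fun _ : Fin k => uniformFin n)
            {ω | Function.Injective fun t => memPlace σ a s0 ω t}).toReal := by
  classical
  set q := ⌈3 / δ⌉₊ with hq
  have hq0 : 0 < q := Nat.ceil_pos.2 (by positivity)
  refine ⟨4 * (6 * (q + 2)), by positivity, fun ε hε => ?_⟩
  obtain ⟨n₀, hn₀⟩ := exists_forall_log_bounds (8 * (6 * (q + 2)) + 8) (7 / ε)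
  refine ⟨n₀, fun n hn k m hk hm hkm => ?_⟩
  obtain ⟨hlog, hloglog, hnε⟩ := hn₀ n hn
  have hn0 : 0 < n := by
    rcases Nat.eq_zero_or_pos n with rfl | h
    · norm_num at hlog
    · exact h
  have hk' : (0 : ℝ) < k := lt_of_lt_of_le (by positivity) hk
  have hk0 : 0 < k := by exact_mod_cast hk'
  set l := ⌈(n / k : ℝ)⌉₊ + ⌈Real.log n⌉₊ with hl
  have hceil := Nat.le_ceil (n / k : ℝ)
  have hceil' := Nat.le_ceil (Real.log n)
  have hllog : Real.log n ≤ l := by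
    rw [hl]
    push_cast
    linarith [(Nat.cast_nonneg ⌈(n / k : ℝ)⌉₊ : (0 : ℝ) ≤ _)]
  have hl0 : 0 < l := by
    have : (0 : ℝ) < l := by linarith
    exact_mod_cast this
  have hlr : (l : ℝ) ≤ n / k + Real.log n + 2 := by
    have h1 := Nat.ceil_lt_add_one (show (0 : ℝ) ≤ n / k by positivity)
    have h2 := Nat.ceil_lt_add_one (show 0 ≤ Real.log n by linarith)
    rw [hl]
    push_cast
    linarith
  have hkl : n ≤ k * l := by
    have h1 : (n / k : ℝ) ≤ l := by
      rw [hl]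
      push_cast
      linarith
    rw [div_le_iff₀ hk'] at h1
    have h2 : (n : ℝ) ≤ (k * l : ℕ) := by
      push_cast
      linarith
    exact_mod_cast h2
  set b := ⌊(1 - δ) * n⌋₊ with hb
  have hbδ : (b : ℝ) ≤ (1 - δ) * n :=
    Nat.floor_le (mul_nonneg (by linarith) (Nat.cast_nonneg n))
  have hbn : b ≤ n := by
    have : (b : ℝ) ≤ n := by nlinarith [(Nat.cast_nonneg n : (0 : ℝ) ≤ n)]
    exact_mod_cast this
  refine ⟨compactStates q l (6 * l * (q + 1)) b, inferInstance,
    ⟨(0, ∅), initial_mem_compactStates q l _ b⟩, boundedStep q l _, choose q l _ hk0, ?_, ?_⟩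
  · rw [Fintype.card_coe]
    refine card_compactStates_le_two_pow hl0 hbn hlog hlr ?_ ?_
    · rw [mul_div_assoc', div_le_iff₀ hk']
      linarith
    · exact (mul_le_mul_of_nonneg_left hloglog (by linarith)).trans hm
  · refine one_sub_le_toReal_pi_uniformFin hn0 (B := {ω | ¬ Good q l ω}) (fun ω hω => ?_) ?_
    · exact injective_memPlace hk0 hl0 hq0 (by simpa using hω)
    · refine (card_not_good_le q hl0 hn0 hkl (β := 1 - 2 * δ / 3) fun t ht => ?_).trans ?_
      · refine round_add_div_le hδ0 (le_trans ?_ hbδ)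
        exact_mod_cast ht.le
      · gcongr
        exact failure_bound_le hδ0 hδ1 hε hn0 hbn hk hllog hnε
end
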